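/- arXiv:2004.09104 — 5 statements merged into one kernel-verified Lean document; each statement's English description precedes it below -/
import Mathlib

section
/- Let N ≥ 1 and let σ be the step sequence of a Dyck path of length 2N with a local minimum at j (σ(j)=−1, σ(j+1)=+1), for some j ∈ {1,…,2N−1}. Then the function F = V_{σ/∨_j} of the variables (x_1,…,x_{j−1},ξ,x_{j+2},…,x_{2N}) satisfies, at every point of the chamber x_1<⋯<x_{j−1}<ξ<x_{j+2}<⋯<x_{2N}, the third-order PDE (κ=4): ∂³F/∂ξ³ − 4 Σ_{i∉{j,j+1}} ( (1/4)·(∂F/∂ξ)/(x_i−ξ)² − (∂²F/∂x_i∂ξ)/(x_i−ξ) ) + 2 Σ_{i∉{j,j+1}} ( (1/2)·F/(x_i−ξ)³ − (∂F/∂x_i)/(x_i−ξ)² ) = 0. -/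
/-!
Write `ξ = x_j`, `u_i = 1 / (x_i - ξ)`, and let `i` range over the set `I` of indices other than
`j`, `j + 1`. Put `q_k = ∑ σ_i u_i^k`, `p_k = ∑ u_i^k`. The fused block is `σ_j P q_1`, where the
product `P` does not involve `ξ`, and `∂_ξ q_k = k q_{k+1}`, so its `ξ`-derivatives are
`σ_j P q_2`, `2 σ_j P q_3`, `6 σ_j P q_4`. With `L_i = ∂_i log P`, the left-hand side of the
equation divided by `σ_j P` is

`6 q_4 - p_2 q_2 + 4 (q_2 ∑ u_i L_i - 2 q_4) + p_3 q_1 - 2 (q_1 ∑ u_i² L_i - q_4)`.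

The `q_4` terms cancel. Since `(u_s - u_t) / (x_s - x_t) = - u_s u_t` and `σ_i² = 1`, pairing the
terms of the double sums gives `4 ∑ u_i L_i = p_2 - q_1²` (`blockLogDeriv_inv`) and
`2 ∑ u_i² L_i = p_3 - q_1 q_2` (`blockLogDeriv_inv_sq`), and everything else cancels too.
-/

open Filter Finset
open scoped BigOperators Classical Topology

noncomputable section

/-- The open chamber `x 0 < x 1 < ⋯ < x (n-1)`. -/
def chamber (n : ℕ) : Set (Fin n → ℝ) := {x | ∀ i j : Fin n, i < j → x i < x j}

/-- Planar pair partitions of `{0, …, 2N-1}` (i.e. of `{1,…,2N}` in 1-based labelling),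
encoded as noncrossing fixed-point-free involutions: the links are the pairs `{i, f i}`. -/
def PlanarPair (N : ℕ) : Type :=
  {f : Fin (2 * N) → Fin (2 * N) //
    (∀ i, f (f i) = i) ∧ (∀ i, f i ≠ i) ∧
      ∀ i j, i < j → j < f i → i < f j ∧ f j < f i}

instance (N : ℕ) : Fintype (PlanarPair N) := by
  unfold PlanarPair; infer_instance

/-- The Dyck step sequence of a planar pair partition: `+1` at openers, `-1` at closers. -/
def pairSign {N : ℕ} (α : PlanarPair N) (i : Fin (2 * N)) : ℝ :=
  if i < α.val i then 1 else -1

/-- The conformal block of a sign sequence: `∏_{i<j} (x_j - x_i)^{σ_i σ_j / 2}`. -/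
def cblock {n : ℕ} (σ : Fin n → ℝ) (x : Fin n → ℝ) : ℝ :=
  ∏ p ∈ univ.filter (fun p : Fin n × Fin n => p.1 < p.2),
    (x p.2 - x p.1) ^ (σ p.1 * σ p.2 / 2)

/-- `σ` is the step sequence of a Dyck path. -/
def IsDyck {n : ℕ} (σ : Fin n → ℝ) : Prop :=
  (∀ i, σ i = 1 ∨ σ i = -1) ∧
    (∀ k : Fin n, 0 ≤ ∑ i ∈ univ.filter (fun i : Fin n => i ≤ k), σ i) ∧
    ∑ i, σ i = 0

/-- The relation `α ⟵ β`: every link of `β` joins an opener of `α` to a closer of `α`. -/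
def kwRel {N : ℕ} (α β : PlanarPair N) : Prop :=
  ∀ i, (i < α.val i) ↔ ¬ β.val i < α.val (β.val i)

/-- The incidence matrix `M` of the relation `⟵`. -/
def Mmat (N : ℕ) : Matrix (PlanarPair N) (PlanarPair N) ℝ :=
  fun α β => if kwRel α β then 1 else 0

/-- The κ = 4 pure partition functions `Z_α = Σ_β (M⁻¹)_{α,β} U_β`. -/
def pureZ {N : ℕ} (α : PlanarPair N) (x : Fin (2 * N) → ℝ) : ℝ :=
  ∑ β : PlanarPair N, (Mmat N)⁻¹ α β * cblock (pairSign β) x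

/-- Partial derivative in the `i`-th coordinate. -/
def pd {n : ℕ} (i : Fin n) (f : (Fin n → ℝ) → ℝ) : (Fin n → ℝ) → ℝ :=
  fun x => fderiv ℝ f x (Pi.single i 1)

/-- Doubling a configuration point: the limit point of total fusion. -/
def dup {N : ℕ} (y : Fin (2 * N) → ℝ) : Fin (2 * (2 * N)) → ℝ :=
  fun i => y ⟨i.val / 2, by have := i.2; omega⟩

/-- The fusion normalization `∏_j (x_{2j} - x_{2j-1})^{1/2}`. -/
def fuseDenom {N : ℕ} (x : Fin (2 * (2 * N)) → ℝ) : ℝ :=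
  ∏ j : Fin (2 * N),
    (x ⟨2 * j.val + 1, by have := j.2; omega⟩ - x ⟨2 * j.val, by have := j.2; omega⟩) ^
      ((1 : ℝ) / 2)

/-- `α` contains no link of the form `{2j-1, 2j}` (1-based). -/
def noFuseLink {N : ℕ} (α : PlanarPair (2 * N)) : Prop :=
  ∀ j : Fin (2 * N),
    α.val ⟨2 * j.val, by have := j.2; omega⟩ ≠ ⟨2 * j.val + 1, by have := j.2; omega⟩

/-- The fused pure partition function `Ẑ_α`, defined as the fusion limit. -/
def fusedZ {N : ℕ} (α : PlanarPair (2 * N)) (y : Fin (2 * N) → ℝ) : ℝ :=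
  limUnder (𝓝[chamber (2 * (2 * N))] dup y) fun x => pureZ α x / fuseDenom x

/-- The single-fusion of a conformal block with a slope at `j` (0-based `j`, `j+1`);
the fused point `ξ` sits at coordinate `j`, and coordinate `j+1` is ignored. -/
def Ufuse {n : ℕ} (σ : Fin n → ℝ) (j : ℕ) (hj : j + 1 < n) (x : Fin n → ℝ) : ℝ :=
  (∏ p ∈ univ.filter (fun p : Fin n × Fin n =>
      p.1 < p.2 ∧ p.1.val ≠ j ∧ p.1.val ≠ j + 1 ∧ p.2.val ≠ j ∧ p.2.val ≠ j + 1),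
    (x p.2 - x p.1) ^ (σ p.1 * σ p.2 / 2)) *
  ∏ i ∈ univ.filter (fun i : Fin n => i.val ≠ j ∧ i.val ≠ j + 1),
    |x i - x ⟨j, by omega⟩| ^ (σ i * σ ⟨j, by omega⟩)

/-- The single-fusion `V_{σ/∨_j}` of a conformal block with a local minimum at `j`. -/
def Vfuse {n : ℕ} (σ : Fin n → ℝ) (j : ℕ) (hj : j + 1 < n) (x : Fin n → ℝ) : ℝ :=
  (∏ p ∈ univ.filter (fun p : Fin n × Fin n =>
      p.1 < p.2 ∧ p.1.val ≠ j ∧ p.1.val ≠ j + 1 ∧ p.2.val ≠ j ∧ p.2.val ≠ j + 1),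
    (x p.2 - x p.1) ^ (σ p.1 * σ p.2 / 2)) *
  ∑ i ∈ univ.filter (fun i : Fin n => i.val ≠ j ∧ i.val ≠ j + 1),
    σ i * σ ⟨j, by omega⟩ / (x i - x ⟨j, by omega⟩)

/-- The single-fusion `Z_{α/⨿_j}` of a pure partition function. -/
def Zfuse {N : ℕ} (α : PlanarPair N) (j : ℕ) (hj : j + 1 < 2 * N) (x : Fin (2 * N) → ℝ) : ℝ :=
  (∑ β ∈ univ.filter (fun β : PlanarPair N =>
      pairSign β ⟨j, by omega⟩ = -1 ∧ pairSign β ⟨j + 1, hj⟩ = 1),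
    (Mmat N)⁻¹ α β * Vfuse (pairSign β) j hj x) +
  ∑ β ∈ univ.filter (fun β : PlanarPair N =>
      pairSign β ⟨j, by omega⟩ = pairSign β ⟨j + 1, hj⟩),
    (Mmat N)⁻¹ α β * Ufuse (pairSign β) j hj x

/-- The chamber `x_1 < ⋯ < x_{j-1} < ξ < x_{j+2} < ⋯` for single fusion at `j`:
coordinate `j` carries `ξ` and coordinate `j+1` is ignored. -/
def fusedChamber (n j : ℕ) : Set (Fin n → ℝ) :=
  {x | ∀ k l : Fin n, k < l → k.val ≠ j + 1 → l.val ≠ j + 1 → x k < x l}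

/-- Successor inside `Fin n` (identity at the top). -/
def fsucc {n : ℕ} (e : Fin n) : Fin n := if h : e.val + 1 < n then ⟨e.val + 1, h⟩ else e

/-- The set `J_n^m` of permutations from the fusion combinatorics. -/
def Jset (n m : ℕ) : Finset (Equiv.Perm (Fin n)) :=
  univ.filter fun σ =>
    (∀ k l : Fin n, k.val % 2 = 0 → l.val % 2 = 0 → k.val < l.val → l.val < 2 * m →
      σ k < σ l) ∧
    (∀ k : Fin n, k.val % 2 = 0 → k.val < 2 * m → σ k < σ (fsucc k)) ∧
    ∀ k l : Fin n, 2 * m ≤ k.val → k.val < l.val → σ k < σ l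


/-! ### Partial derivatives -/

lemma HasFDerivAt.pd_eq {n : ℕ} {f : (Fin n → ℝ) → ℝ} {f' : (Fin n → ℝ) →L[ℝ] ℝ}
    {x : Fin n → ℝ} (h : HasFDerivAt f f' x) (i : Fin n) : pd i f x = f' (Pi.single i 1) := by
  unfold pd; rw [h.fderiv]

lemma pd_congr_of_isOpen {n : ℕ} {U : Set (Fin n → ℝ)} (hU : IsOpen U)
    {f g : (Fin n → ℝ) → ℝ} (hfg : Set.EqOn f g U) (i : Fin n) :
    Set.EqOn (pd i f) (pd i g) U := by
  intro x hx
  have h : f =ᶠ[𝓝 x] g := hfg.eventuallyEq_of_mem (hU.mem_nhds hx)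
  unfold pd
  rw [h.fderiv_eq]

lemma pd_const_mul {n : ℕ} (c : ℝ) (f : (Fin n → ℝ) → ℝ) (x : Fin n → ℝ)
    (hf : DifferentiableAt ℝ f x) (i : Fin n) :
    pd i (fun y => c * f y) x = c * pd i f x := by
  rw [(hf.hasFDerivAt.const_mul c).pd_eq]
  rfl

lemma isOpen_fusedChamber (n j : ℕ) : IsOpen (fusedChamber n j) := by
  unfold fusedChamber
  simp only [Set.ofPred_forall]
  refine isOpen_iInter_of_finite fun k => isOpen_iInter_of_finite fun l =>
    isOpen_iInter_of_finite fun _ => isOpen_iInter_of_finite fun _ =>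
    isOpen_iInter_of_finite fun _ => ?_
  exact isOpen_lt (continuous_apply k) (continuous_apply l)

/-! ### The two factors of the fused block -/

/-- The pairs `p.1 < p.2` with both entries in `I`. -/
def ordPairs {n : ℕ} (I : Finset (Fin n)) : Finset (Fin n × Fin n) :=
  univ.filter fun p => p.1 < p.2 ∧ p.1 ∈ I ∧ p.2 ∈ I

/-- The product `∏ (x_s - x_t)^{σ_t σ_s / 2}` over the pairs `t < s` of `I`. -/
def blockProd {n : ℕ} (I : Finset (Fin n)) (σ x : Fin n → ℝ) : ℝ :=
  ∏ p ∈ ordPairs I, (x p.2 - x p.1) ^ (σ p.1 * σ p.2 / 2)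

/-- The signed power sum `q_k = ∑_{i ∈ I} σ_i (x_i - ξ)^{-k}`, with `ξ = x a`. -/
def signedSum {n : ℕ} (I : Finset (Fin n)) (σ : Fin n → ℝ) (a : Fin n) (k : ℕ)
    (x : Fin n → ℝ) : ℝ :=
  ∑ i ∈ I, σ i * ((x i - x a)⁻¹) ^ k

/-- The logarithmic derivative of `blockProd` in the direction `v`. -/
def blockLogDeriv {n : ℕ} (I : Finset (Fin n)) (σ x v : Fin n → ℝ) : ℝ :=
  ∑ p ∈ ordPairs I, σ p.1 * σ p.2 / 2 / (x p.2 - x p.1) * (v p.2 - v p.1)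

lemma hasFDerivAt_coord_sub {n : ℕ} (a b : Fin n) (x : Fin n → ℝ) :
    HasFDerivAt (fun y : Fin n → ℝ => y a - y b)
      ((ContinuousLinearMap.proj a : (Fin n → ℝ) →L[ℝ] ℝ) - ContinuousLinearMap.proj b) x :=
  (hasFDerivAt_apply a x).sub (hasFDerivAt_apply b x)

lemma blockProd_hasFDerivAt {n : ℕ} (I : Finset (Fin n)) (σ x : Fin n → ℝ)
    (hx : ∀ p ∈ ordPairs I, x p.1 < x p.2) :
    ∃ f' : (Fin n → ℝ) →L[ℝ] ℝ, HasFDerivAt (blockProd I σ) f' x ∧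
      ∀ v, f' v = blockProd I σ x * blockLogDeriv I σ x v := by
  have h := HasFDerivAt.finsetProd (u := ordPairs I) (x := x)
    (g := fun p (y : Fin n → ℝ) => (y p.2 - y p.1) ^ (σ p.1 * σ p.2 / 2))
    (fun p hp => (hasFDerivAt_coord_sub p.2 p.1 x).rpow_const
      (Or.inl (sub_pos.2 (hx p hp)).ne'))
  refine ⟨_, h, fun v => ?_⟩
  rw [blockLogDeriv, Finset.mul_sum, _root_.sum_apply]
  refine Finset.sum_congr rfl fun p hp => ?_
  have hpos : 0 < x p.2 - x p.1 := sub_pos.2 (hx p hp)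
  have hP : blockProd I σ x = (x p.2 - x p.1) ^ (σ p.1 * σ p.2 / 2) *
      ∏ q ∈ (ordPairs I).erase p, (x q.2 - x q.1) ^ (σ q.1 * σ q.2 / 2) :=
    (Finset.mul_prod_erase _ _ hp).symm
  rw [hP]
  simp only [_root_.smul_apply, _root_.sub_apply,
    ContinuousLinearMap.proj_apply, smul_eq_mul, Real.rpow_sub_one hpos.ne']
  ring

lemma signedSum_hasFDerivAt {n : ℕ} (I : Finset (Fin n)) (σ : Fin n → ℝ) (a : Fin n) (k : ℕ)
    (x : Fin n → ℝ) (hx : ∀ i ∈ I, x i - x a ≠ 0) :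
    ∃ f' : (Fin n → ℝ) →L[ℝ] ℝ, HasFDerivAt (signedSum I σ a k) f' x ∧
      ∀ v, f' v = ∑ i ∈ I, -(k * σ i * ((x i - x a)⁻¹) ^ (k + 1)) * (v i - v a) := by
  have h := HasFDerivAt.fun_sum (u := I) (x := x)
    (A := fun i (y : Fin n → ℝ) => σ i * ((y i - y a)⁻¹) ^ k)
    (fun i hi => (((hasDerivAt_inv (hx i hi)).comp_hasFDerivAt x
      (hasFDerivAt_coord_sub i a x)).pow k).const_mul (σ i))
  refine ⟨_, h, fun v => ?_⟩
  rw [_root_.sum_apply]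
  refine Finset.sum_congr rfl fun i hi => ?_
  simp only [_root_.smul_apply, _root_.sub_apply,
    ContinuousLinearMap.proj_apply, smul_eq_mul, nsmul_eq_mul, Function.comp]
  rcases k with _ | k
  · simp
  · simp only [Nat.add_sub_cancel, inv_pow]
    have := hx i hi
    field_simp
    ring

/-- `F_k = P · q_k`; the fused block is `σ_j F_1`. -/
def blockSum {n : ℕ} (I : Finset (Fin n)) (σ : Fin n → ℝ) (a : Fin n) (k : ℕ)
    (x : Fin n → ℝ) : ℝ :=
  blockProd I σ x * signedSum I σ a k x

lemma blockSum_hasFDerivAt {n : ℕ} (I : Finset (Fin n)) (σ : Fin n → ℝ) (a : Fin n) (k : ℕ)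
    (x : Fin n → ℝ) (hx : ∀ p ∈ ordPairs I, x p.1 < x p.2) (hx' : ∀ i ∈ I, x i - x a ≠ 0) :
    ∃ f' : (Fin n → ℝ) →L[ℝ] ℝ, HasFDerivAt (blockSum I σ a k) f' x ∧
      ∀ v, f' v = blockProd I σ x * (blockLogDeriv I σ x v * signedSum I σ a k x +
        ∑ i ∈ I, -(k * σ i * ((x i - x a)⁻¹) ^ (k + 1)) * (v i - v a)) := by
  obtain ⟨p', hp, hp'⟩ := blockProd_hasFDerivAt I σ x hx
  obtain ⟨s', hs, hs'⟩ := signedSum_hasFDerivAt I σ a k x hx'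
  refine ⟨_, hp.mul hs, fun v => ?_⟩
  simp only [_root_.smul_apply, _root_.add_apply, smul_eq_mul, hp', hs']
  ring

/-- Since `P` does not involve `ξ`, `∂_ξ F_k = k F_{k+1}`. -/
lemma pd_blockSum_self {n : ℕ} (I : Finset (Fin n)) (σ : Fin n → ℝ) (a : Fin n) (ha : a ∉ I)
    (k : ℕ) (x : Fin n → ℝ) (hx : ∀ p ∈ ordPairs I, x p.1 < x p.2)
    (hx' : ∀ i ∈ I, x i - x a ≠ 0) :
    pd a (blockSum I σ a k) x = k * blockSum I σ a (k + 1) x := by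
  obtain ⟨f', hf, hf'⟩ := blockSum_hasFDerivAt I σ a k x hx hx'
  rw [hf.pd_eq, hf']
  have h0 : blockLogDeriv I σ x (Pi.single a 1) = 0 := by
    refine Finset.sum_eq_zero fun p hp => ?_
    simp only [ordPairs, mem_filter, mem_univ, true_and] at hp
    have h1 : p.1 ≠ a := fun h => ha (h ▸ hp.2.1)
    have h2 : p.2 ≠ a := fun h => ha (h ▸ hp.2.2)
    simp [h1, h2]
  rw [h0, zero_mul, zero_add, blockSum, mul_left_comm]
  congr 1
  rw [signedSum, Finset.mul_sum]
  refine Finset.sum_congr rfl fun i hi => ?_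
  have h1 : i ≠ a := fun h => ha (h ▸ hi)
  simp [h1]
  ring

lemma pd_blockSum_of_mem {n : ℕ} (I : Finset (Fin n)) (σ : Fin n → ℝ) (a : Fin n) (ha : a ∉ I)
    (k : ℕ) (x : Fin n → ℝ) (hx : ∀ p ∈ ordPairs I, x p.1 < x p.2)
    (hx' : ∀ i ∈ I, x i - x a ≠ 0) (i : Fin n) (hi : i ∈ I) :
    pd i (blockSum I σ a k) x =
      blockProd I σ x * (blockLogDeriv I σ x (Pi.single i 1) * signedSum I σ a k x -
        k * σ i * ((x i - x a)⁻¹) ^ (k + 1)) := by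
  obtain ⟨f', hf, hf'⟩ := blockSum_hasFDerivAt I σ a k x hx hx'
  rw [hf.pd_eq, hf', Finset.sum_eq_single_of_mem i hi]
  · have h1 : a ≠ i := fun h => ha (h ▸ hi)
    rw [Pi.single_eq_same, Pi.single_eq_of_ne h1]
    ring
  · intro b hb hbi
    have h1 : a ≠ i := fun h => ha (h ▸ hi)
    simp [h1, hbi]

/-! ### Algebraic identities -/

lemma sum_ordPairs_symm {n : ℕ} (I : Finset (Fin n)) (f : Fin n → Fin n → ℝ)
    (hf : ∀ i k, f i k = f k i) :
    2 * ∑ p ∈ ordPairs I, f p.1 p.2 = (∑ i ∈ I, ∑ k ∈ I, f i k) - ∑ i ∈ I, f i i := by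
  have e1 : ∑ p ∈ ordPairs I, f p.1 p.2 = ∑ i ∈ I, ∑ k ∈ I, if i < k then f i k else 0 := by
    rw [← Finset.sum_product', ← Finset.sum_filter]
    refine Finset.sum_congr ?_ fun _ _ => rfl
    ext p
    simp only [ordPairs, mem_filter, mem_univ, true_and, mem_product]
    tauto
  have e2 : ∑ p ∈ ordPairs I, f p.1 p.2 = ∑ i ∈ I, ∑ k ∈ I, if k < i then f i k else 0 := by
    rw [e1, Finset.sum_comm]
    refine Finset.sum_congr rfl fun i _ => Finset.sum_congr rfl fun k _ => ?_
    split_ifs <;> first | rfl | exact hf _ _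
  have e3 : ∑ i ∈ I, f i i = ∑ i ∈ I, ∑ k ∈ I, if i = k then f i k else 0 := by
    refine Finset.sum_congr rfl fun i hi => ?_
    rw [Finset.sum_ite_eq, if_pos hi]
  rw [two_mul, e3]
  nth_rewrite 1 [e1]
  rw [e2, eq_sub_iff_add_eq]
  simp only [← Finset.sum_add_distrib]
  refine Finset.sum_congr rfl fun i _ => Finset.sum_congr rfl fun k _ => ?_
  rcases lt_trichotomy i k with h | h | h
  · simp [h, h.not_gt, h.ne]
  · simp [h]
  · simp [h, h.not_gt, h.ne']

/-- A weighted sum of the `∂_i log P` is a single directional derivative. -/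
lemma sum_mul_blockLogDeriv {n : ℕ} (I : Finset (Fin n)) (σ x w : Fin n → ℝ) :
    ∑ i ∈ I, w i * blockLogDeriv I σ x (Pi.single i 1) = blockLogDeriv I σ x w := by
  simp only [blockLogDeriv, Finset.mul_sum]
  rw [Finset.sum_comm]
  refine Finset.sum_congr rfl fun p hp => ?_
  simp only [ordPairs, mem_filter, mem_univ, true_and] at hp
  have key : ∀ b ∈ I, ∑ i ∈ I, w i * (Pi.single i (1 : ℝ) : Fin n → ℝ) b = w b := by
    intro b hb
    simp [Pi.single_apply, hb]
  rw [← key p.1 hp.2.1, ← key p.2 hp.2.2, ← Finset.sum_sub_distrib, Finset.mul_sum]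
  refine Finset.sum_congr rfl fun i _ => ?_
  ring

/-- With `u_i = (x_i - ξ)⁻¹` one has `(u_s - u_t) / (x_s - x_t) = - u_s u_t`, hence
`∑ u_i ∂_i log P = -(q_1² - p_2) / 4`, where `p_k = ∑ u_i ^ k`. -/
lemma blockLogDeriv_inv {n : ℕ} (I : Finset (Fin n)) (σ : Fin n → ℝ) (hσ : ∀ i, σ i * σ i = 1)
    (a : Fin n) (x : Fin n → ℝ) (hx : ∀ p ∈ ordPairs I, x p.1 < x p.2)
    (hx' : ∀ i ∈ I, x i - x a ≠ 0) :
    4 * blockLogDeriv I σ x (fun i => (x i - x a)⁻¹) =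
      (∑ i ∈ I, ((x i - x a)⁻¹) ^ 2) - signedSum I σ a 1 x ^ 2 := by
  have h1 : blockLogDeriv I σ x (fun i => (x i - x a)⁻¹) = ∑ p ∈ ordPairs I,
      (-1 / 2) * ((σ p.1 * (x p.1 - x a)⁻¹) * (σ p.2 * (x p.2 - x a)⁻¹)) := by
    refine Finset.sum_congr rfl fun p hp => ?_
    have hpos : x p.2 - x p.1 ≠ 0 := (sub_pos.2 (hx p hp)).ne'
    simp only [ordPairs, mem_filter, mem_univ, true_and] at hp
    have := hx' _ hp.2.1
    have := hx' _ hp.2.2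
    field_simp
    ring
  rw [h1, ← Finset.mul_sum]
  have h2 := sum_ordPairs_symm I
    (fun i k => (σ i * (x i - x a)⁻¹) * (σ k * (x k - x a)⁻¹)) (fun i k => mul_comm _ _)
  have h3 : ∑ i ∈ I, (σ i * (x i - x a)⁻¹) * (σ i * (x i - x a)⁻¹)
      = ∑ i ∈ I, ((x i - x a)⁻¹) ^ 2 := by
    refine Finset.sum_congr rfl fun i _ => ?_
    linear_combination ((x i - x a)⁻¹) ^ 2 * hσ i
  rw [h3, ← Finset.sum_mul_sum] at h2
  simp only [signedSum, pow_one]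
  linear_combination (-1) * h2

/-- The analogue of `blockLogDeriv_inv` with weights `u_i²`, using
`(u_s² - u_t²) / (x_s - x_t) = - u_s u_t (u_s + u_t)`. -/
lemma blockLogDeriv_inv_sq {n : ℕ} (I : Finset (Fin n)) (σ : Fin n → ℝ) (hσ : ∀ i, σ i * σ i = 1)
    (a : Fin n) (x : Fin n → ℝ) (hx : ∀ p ∈ ordPairs I, x p.1 < x p.2)
    (hx' : ∀ i ∈ I, x i - x a ≠ 0) :
    2 * blockLogDeriv I σ x (fun i => ((x i - x a)⁻¹) ^ 2) =
      (∑ i ∈ I, ((x i - x a)⁻¹) ^ 3) - signedSum I σ a 1 x * signedSum I σ a 2 x := by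
  have h1 : blockLogDeriv I σ x (fun i => ((x i - x a)⁻¹) ^ 2) = ∑ p ∈ ordPairs I,
      (-1 / 2) * ((σ p.1 * (x p.1 - x a)⁻¹) * (σ p.2 * ((x p.2 - x a)⁻¹) ^ 2) +
        (σ p.1 * ((x p.1 - x a)⁻¹) ^ 2) * (σ p.2 * (x p.2 - x a)⁻¹)) := by
    refine Finset.sum_congr rfl fun p hp => ?_
    have hpos : x p.2 - x p.1 ≠ 0 := (sub_pos.2 (hx p hp)).ne'
    simp only [ordPairs, mem_filter, mem_univ, true_and] at hp
    have := hx' _ hp.2.1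
    have := hx' _ hp.2.2
    field_simp
    ring
  rw [h1, ← Finset.mul_sum]
  have h2 := sum_ordPairs_symm I
    (fun i k => (σ i * (x i - x a)⁻¹) * (σ k * ((x k - x a)⁻¹) ^ 2) +
      (σ i * ((x i - x a)⁻¹) ^ 2) * (σ k * (x k - x a)⁻¹)) (fun i k => by ring)
  have h3 : ∑ i ∈ I, ((σ i * (x i - x a)⁻¹) * (σ i * ((x i - x a)⁻¹) ^ 2) +
      (σ i * ((x i - x a)⁻¹) ^ 2) * (σ i * (x i - x a)⁻¹))
      = 2 * ∑ i ∈ I, ((x i - x a)⁻¹) ^ 3 := by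
    rw [Finset.mul_sum]
    refine Finset.sum_congr rfl fun i _ => ?_
    linear_combination 2 * ((x i - x a)⁻¹) ^ 3 * hσ i
  rw [h3] at h2
  simp only [Finset.sum_add_distrib, ← Finset.sum_mul_sum] at h2
  simp only [signedSum, pow_one, Finset.sum_add_distrib]
  linear_combination (-1 / 2) * h2

/-! ### The third-order equation -/

lemma Vfuse_eq_blockSum {n : ℕ} (σ : Fin n → ℝ) (j : ℕ) (hj : j + 1 < n) :
    Vfuse σ j hj = fun x => σ ⟨j, by omega⟩ *
      blockSum (univ.filter fun i : Fin n => i.val ≠ j ∧ i.val ≠ j + 1) σ ⟨j, by omega⟩ 1 x := by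
  funext x
  rw [Vfuse, blockSum, mul_left_comm]
  congr 1
  · refine Finset.prod_congr ?_ fun _ _ => rfl
    ext p
    simp only [ordPairs, mem_filter, mem_univ, true_and]
    tauto
  · rw [signedSum, Finset.mul_sum]
    refine Finset.sum_congr rfl fun i _ => ?_
    rw [pow_one, div_eq_mul_inv]
    ring

/-- **Statement 12.** `V_{σ/∨_j}` satisfies the third-order PDE (κ = 4) in the fusion
variable `ξ` (coordinate `j`; coordinate `j+1` is ignored). -/
theorem Vfuse_thirdOrderPDE (N : ℕ) (hN : 1 ≤ N)
    (σ : Fin (2 * N) → ℝ) (hσ : IsDyck σ)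
    (j : ℕ) (hj : j + 1 < 2 * N)
    (hmin : σ ⟨j, by omega⟩ = -1 ∧ σ ⟨j + 1, hj⟩ = 1) :
    ∀ x ∈ fusedChamber (2 * N) j,
      pd ⟨j, by omega⟩ (pd ⟨j, by omega⟩ (pd ⟨j, by omega⟩ (Vfuse σ j hj))) x
        - 4 * ∑ i ∈ univ.filter (fun i : Fin (2 * N) => i.val ≠ j ∧ i.val ≠ j + 1),
            ((1 / 4) * pd ⟨j, by omega⟩ (Vfuse σ j hj) x / (x i - x ⟨j, by omega⟩) ^ 2 -
              pd i (pd ⟨j, by omega⟩ (Vfuse σ j hj)) x / (x i - x ⟨j, by omega⟩))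
        + 2 * ∑ i ∈ univ.filter (fun i : Fin (2 * N) => i.val ≠ j ∧ i.val ≠ j + 1),
            ((1 / 2) * Vfuse σ j hj x / (x i - x ⟨j, by omega⟩) ^ 3 -
              pd i (Vfuse σ j hj) x / (x i - x ⟨j, by omega⟩) ^ 2) = 0 := by
  intro x hx
  set a : Fin (2 * N) := ⟨j, by omega⟩ with ha
  set I : Finset (Fin (2 * N)) := univ.filter fun i => i.val ≠ j ∧ i.val ≠ j + 1 with hI
  have hsq : ∀ i, σ i * σ i = 1 := fun i => by rcases hσ.1 i with h | h <;> rw [h] <;> norm_num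
  have haI : a ∉ I := by simp [hI, ha]
  have hU := isOpen_fusedChamber (2 * N) j
  have hpair : ∀ y ∈ fusedChamber (2 * N) j, ∀ p ∈ ordPairs I, y p.1 < y p.2 := by
    intro y hy p hp
    simp only [ordPairs, hI, mem_filter, mem_univ, true_and] at hp
    exact hy _ _ hp.1 hp.2.1.2 hp.2.2.2
  have hne : ∀ y ∈ fusedChamber (2 * N) j, ∀ i ∈ I, y i - y a ≠ 0 := by
    intro y hy i hi
    simp only [hI, mem_filter, mem_univ, true_and] at hi
    have haj : a.val ≠ j + 1 := by simp [ha]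
    rcases lt_trichotomy i a with h | h | h
    · exact (sub_neg.2 (hy _ _ h hi.2 haj)).ne
    · exact absurd (congrArg Fin.val h) hi.1
    · exact (sub_pos.2 (hy _ _ h haj hi.2)).ne'
  have hdiff : ∀ k, ∀ y ∈ fusedChamber (2 * N) j,
      DifferentiableAt ℝ (blockSum I σ a k) y := fun k y hy =>
    (blockSum_hasFDerivAt I σ a k y (hpair y hy) (hne y hy)).choose_spec.1.differentiableAt
  have hstep : ∀ (c : ℝ) (k : ℕ), Set.EqOn (pd a fun y => c * blockSum I σ a k y)
      (fun y => c * k * blockSum I σ a (k + 1) y) (fusedChamber (2 * N) j) := by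
    intro c k y hy
    simp only
    rw [pd_const_mul _ _ _ (hdiff k y hy),
      pd_blockSum_self I σ a haI k y (hpair y hy) (hne y hy), mul_assoc]
  have d0 : Vfuse σ j hj = fun y => σ a * blockSum I σ a 1 y := Vfuse_eq_blockSum σ j hj
  rw [d0]
  have d1 := hstep (σ a) 1
  have d2 := (pd_congr_of_isOpen hU d1 a).trans (hstep _ 2)
  have d3 := (pd_congr_of_isOpen hU d2 a).trans (hstep _ 3)
  have m1 : ∀ i ∈ I, pd i (fun y => σ a * blockSum I σ a 1 y) x = σ a * (blockProd I σ x *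
      (blockLogDeriv I σ x (Pi.single i 1) * signedSum I σ a 1 x - σ i * ((x i - x a)⁻¹) ^ 2)) := by
    intro i hi
    rw [pd_const_mul _ _ _ (hdiff 1 x hx),
      pd_blockSum_of_mem I σ a haI 1 x (hpair x hx) (hne x hx) i hi]
    norm_num
  have m2 : ∀ i ∈ I, pd i (pd a fun y => σ a * blockSum I σ a 1 y) x = σ a * (blockProd I σ x *
      (blockLogDeriv I σ x (Pi.single i 1) * signedSum I σ a 2 x -
        2 * σ i * ((x i - x a)⁻¹) ^ 3)) := by
    intro i hi
    rw [pd_congr_of_isOpen hU d1 i hx, pd_const_mul _ _ _ (hdiff 2 x hx),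
      pd_blockSum_of_mem I σ a haI 2 x (hpair x hx) (hne x hx) i hi]
    norm_num
  rw [d3 hx, d1 hx]
  -- The two sums of the equation, expressed through `q_k`, `∑ u_i ^ k` and `blockLogDeriv`.
  have s1 : ∑ i ∈ I, ((1 / 4) * (σ a * ((1 : ℕ) : ℝ) * blockSum I σ a (1 + 1) x) / (x i - x a) ^ 2 -
        pd i (pd a fun y => σ a * blockSum I σ a 1 y) x / (x i - x a)) =
      σ a * blockProd I σ x * ((1 / 4) * signedSum I σ a 2 x * ∑ i ∈ I, ((x i - x a)⁻¹) ^ 2 -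
        signedSum I σ a 2 x * blockLogDeriv I σ x (fun i => (x i - x a)⁻¹) +
        2 * signedSum I σ a 4 x) := by
    have h4 : signedSum I σ a 4 x = ∑ i ∈ I, σ i * ((x i - x a)⁻¹) ^ 4 := rfl
    rw [← sum_mul_blockLogDeriv, h4]
    simp only [Finset.mul_sum, ← Finset.sum_sub_distrib, ← Finset.sum_add_distrib]
    refine Finset.sum_congr rfl fun i hi => ?_
    rw [m2 i hi, blockSum]
    simp only [div_eq_mul_inv, ← inv_pow]
    push_cast
    ring
  have s2 : ∑ i ∈ I, ((1 / 2) * (σ a * blockSum I σ a 1 x) / (x i - x a) ^ 3 -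
        pd i (fun y => σ a * blockSum I σ a 1 y) x / (x i - x a) ^ 2) =
      σ a * blockProd I σ x * ((1 / 2) * signedSum I σ a 1 x * ∑ i ∈ I, ((x i - x a)⁻¹) ^ 3 -
        signedSum I σ a 1 x * blockLogDeriv I σ x (fun i => ((x i - x a)⁻¹) ^ 2) +
        signedSum I σ a 4 x) := by
    have h4 : signedSum I σ a 4 x = ∑ i ∈ I, σ i * ((x i - x a)⁻¹) ^ 4 := rfl
    rw [← sum_mul_blockLogDeriv, h4]
    simp only [Finset.mul_sum, ← Finset.sum_sub_distrib, ← Finset.sum_add_distrib]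
    refine Finset.sum_congr rfl fun i hi => ?_
    rw [m1 i hi, blockSum]
    simp only [div_eq_mul_inv, ← inv_pow]
    ring
  rw [s1, s2]
  have l1 := blockLogDeriv_inv I σ hsq a x (hpair x hx) (hne x hx)
  have l2 := blockLogDeriv_inv_sq I σ hsq a x (hpair x hx) (hne x hx)
  simp only [blockSum]
  push_cast
  linear_combination σ a * blockProd I σ x *
    (signedSum I σ a 2 x * l1 - signedSum I σ a 1 x * l2)
end
end

section
/- Let N ≥ 1 and let σ be the step sequence of a Dyck path of length 4N such that σ(2j−1)=σ(2j) for every j ∈ {1,…,2N} (a slope at every odd position). Then k ↦ σ(2k) is the step sequence of a Dyck path of length 2N, and for every y_1<⋯<y_{2N}, as x ranges over the chamber X_{4N} with x_{2j−1} → y_j and x_{2j} → y_j for all j ∈ {1,…,2N} simultaneously, the quotient U_σ(x_1,…,x_{4N}) / ∏_{j=1}^{2N}(x_{2j}−x_{2j−1})^{1/2} converges to ∏_{1≤s<t≤2N} (y_t−y_s)^{2σ(2s)σ(2t)}. -/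
/-!
Writing the index set of length `4N` as `2N` blocks of two consecutive positions `2s, 2s+1`, the
product defining the conformal block splits over ordered pairs of blocks (`cblock_eq`). A block
`s` paired with itself contributes `(x_{2s+1} - x_{2s})^{1/2}`, because the two steps in it agree
and square to one; these factors are exactly `fuseDenom`. Two blocks `s < t` contribute four
factors, all carrying the exponent `τ s * τ t / 2`, where `τ` is the halved step sequence. Their
bases all converge to `y t - y s > 0`, so the product of the four converges to
`(y t - y s)^(2 τ s τ t)`. The Dyck property of `τ` holds since each partial sum of `σ` ending at
the second position of a block is twice the corresponding partial sum of `τ`.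
-/

open Filter Finset
open scoped BigOperators Classical Topology

noncomputable section

/-- First position of the `s`-th block of two consecutive positions. -/
def blockFst {n : ℕ} (s : Fin n) : Fin (2 * n) := ⟨2 * s.val, by have := s.2; omega⟩

/-- Second position of the `s`-th block of two consecutive positions. -/
def blockSnd {n : ℕ} (s : Fin n) : Fin (2 * n) := ⟨2 * s.val + 1, by have := s.2; omega⟩

@[to_additive]
theorem prod_blocks {M : Type*} [CommMonoid M] {n : ℕ} (g : Fin (2 * n) → M) :
    ∏ i, g i = ∏ s : Fin n, g (blockFst s) * g (blockSnd s) := by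
  induction n with
  | zero => rfl
  | succ n ih =>
    rw [Fin.prod_univ_castSucc (n := n)]
    have h := ih (fun i => g ⟨i.val, by have := i.2; omega⟩)
    have h2 : ∏ i, g i = (∏ i : Fin (2 * n), g ⟨i.val, by have := i.2; omega⟩) *
        g ⟨2 * n, by omega⟩ * g ⟨2 * n + 1, by omega⟩ :=
      (Fin.prod_univ_castSucc (n := 2 * n + 1) g).trans
        (congrArg (· * _) (Fin.prod_univ_castSucc (n := 2 * n) _))
    rw [h2, h, mul_assoc]
    rfl

/-- Halving a Dyck path all of whose steps come in equal consecutive pairs. -/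
theorem isDyck_half {n : ℕ} {σ : Fin (2 * n) → ℝ} (hσ : IsDyck σ)
    (hslope : ∀ s, σ (blockFst s) = σ (blockSnd s)) :
    IsDyck (fun s : Fin n => σ (blockSnd s)) := by
  obtain ⟨h1, h2, h3⟩ := hσ
  refine ⟨fun s => h1 _, fun k => ?_, ?_⟩
  · have h := h2 (blockSnd k)
    rw [Finset.sum_filter, sum_blocks] at h
    have e : ∀ s : Fin n, ((if blockFst s ≤ blockSnd k then σ (blockFst s) else 0) +
        (if blockSnd s ≤ blockSnd k then σ (blockSnd s) else 0)) =
        2 * (if s ≤ k then σ (blockSnd s) else 0) := by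
      intro s
      have e1 : blockFst s ≤ blockSnd k ↔ s ≤ k := by
        simp only [blockFst, blockSnd, Fin.le_def]; omega
      have e2 : blockSnd s ≤ blockSnd k ↔ s ≤ k := by
        simp only [blockSnd, Fin.le_def]; omega
      simp only [e1, e2, hslope]
      split_ifs <;> ring
    rw [Finset.sum_congr rfl fun s _ => e s, ← Finset.mul_sum] at h
    rw [Finset.sum_filter]
    linarith
  · rw [sum_blocks] at h3
    simp only [hslope, ← two_mul] at h3
    rw [← Finset.mul_sum] at h3
    linarith

/-- The contribution to the conformal block of two distinct blocks `p.1 < p.2`. -/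
def crossFactor {n : ℕ} (σ x : Fin (2 * n) → ℝ) (p : Fin n × Fin n) : ℝ :=
  ((x (blockFst p.2) - x (blockFst p.1)) ^ (σ (blockFst p.1) * σ (blockFst p.2) / 2) *
    (x (blockSnd p.2) - x (blockFst p.1)) ^ (σ (blockFst p.1) * σ (blockSnd p.2) / 2)) *
  ((x (blockFst p.2) - x (blockSnd p.1)) ^ (σ (blockSnd p.1) * σ (blockFst p.2) / 2) *
    (x (blockSnd p.2) - x (blockSnd p.1)) ^ (σ (blockSnd p.1) * σ (blockSnd p.2) / 2))

theorem cblock_eq {n : ℕ} (σ x : Fin (2 * n) → ℝ) :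
    cblock σ x =
      (∏ s : Fin n, (x (blockSnd s) - x (blockFst s)) ^ (σ (blockFst s) * σ (blockSnd s) / 2)) *
      ∏ p ∈ univ.filter (fun p : Fin n × Fin n => p.1 < p.2), crossFactor σ x p := by
  rw [cblock, Finset.prod_filter, Finset.prod_filter, Fintype.prod_prod_type,
    Fintype.prod_prod_type, prod_blocks, ← Finset.prod_mul_distrib]
  refine Finset.prod_congr rfl fun s _ => ?_
  rw [prod_blocks, prod_blocks, ← Finset.prod_mul_distrib]
  -- The diagonal factor is put under the product over `t` as a function supported at `t = s`.
  have hdiag : (x (blockSnd s) - x (blockFst s)) ^ (σ (blockFst s) * σ (blockSnd s) / 2) =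
      ∏ t : Fin n, if s = t then
        (x (blockSnd t) - x (blockFst s)) ^ (σ (blockFst s) * σ (blockSnd t) / 2) else 1 := by
    rw [Finset.prod_ite_eq]; simp
  rw [hdiag, ← Finset.prod_mul_distrib]
  refine Finset.prod_congr rfl fun t _ => ?_
  have e1 : blockFst s < blockFst t ↔ s < t := by
    simp only [blockFst, Fin.lt_def]; omega
  have e2 : blockFst s < blockSnd t ↔ s ≤ t := by
    simp only [blockFst, blockSnd, Fin.lt_def, Fin.le_def]; omega
  have e3 : blockSnd s < blockFst t ↔ s < t := by
    simp only [blockFst, blockSnd, Fin.lt_def]; omega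
  have e4 : blockSnd s < blockSnd t ↔ s < t := by
    simp only [blockSnd, Fin.lt_def]; omega
  simp only [e1, e2, e3, e4]
  rcases lt_trichotomy s t with h | h | h
  · simp [h, h.le, h.ne, crossFactor]
  · simp [h]
  · simp [h.not_gt, h.not_ge, h.ne']

theorem tendsto_crossFactor {n : ℕ} {σ : Fin (2 * n) → ℝ}
    (hslope : ∀ s, σ (blockFst s) = σ (blockSnd s)) {y : Fin n → ℝ} {z : Fin (2 * n) → ℝ}
    (hz1 : ∀ s, z (blockFst s) = y s) (hz2 : ∀ s, z (blockSnd s) = y s)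
    (p : Fin n × Fin n) (hp : y p.1 < y p.2) :
    Tendsto (fun x => crossFactor σ x p) (𝓝 z)
      (𝓝 ((y p.2 - y p.1) ^ (2 * σ (blockSnd p.1) * σ (blockSnd p.2)))) := by
  have hpos : 0 < y p.2 - y p.1 := sub_pos.2 hp
  have key : ∀ (i j : Fin (2 * n)) (c : ℝ), z i = y p.1 → z j = y p.2 →
      Tendsto (fun x : Fin (2 * n) → ℝ => (x j - x i) ^ c) (𝓝 z)
        (𝓝 ((y p.2 - y p.1) ^ c)) := by
    intro i j c hi hj
    rw [← hi, ← hj] at hpos ⊢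
    exact (((continuous_apply j).tendsto z).sub ((continuous_apply i).tendsto z)).rpow_const
      (Or.inl hpos.ne')
  have h := ((key _ _ (σ (blockFst p.1) * σ (blockFst p.2) / 2) (hz1 _) (hz1 _)).mul
    (key _ _ (σ (blockFst p.1) * σ (blockSnd p.2) / 2) (hz1 _) (hz2 _))).mul
    ((key _ _ (σ (blockSnd p.1) * σ (blockFst p.2) / 2) (hz2 _) (hz1 _)).mul
    (key _ _ (σ (blockSnd p.1) * σ (blockSnd p.2) / 2) (hz2 _) (hz2 _)))
  simp only [← Real.rpow_add hpos] at h
  have hexp : σ (blockFst p.1) * σ (blockFst p.2) / 2 + σ (blockFst p.1) * σ (blockSnd p.2) / 2 +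
      (σ (blockSnd p.1) * σ (blockFst p.2) / 2 + σ (blockSnd p.1) * σ (blockSnd p.2) / 2) =
      2 * σ (blockSnd p.1) * σ (blockSnd p.2) := by
    rw [hslope, hslope]
    ring
  rw [hexp] at h
  exact h

/-- Total fusion of a conformal block with a slope at every odd
position: the even-indexed steps form a Dyck path of half the length, and the
normalized limit of `U_σ` is `∏_{s<t} (y_t - y_s)^{2 σ(2s) σ(2t)}`. -/
theorem cblock_total_fusion (N : ℕ) (hN : 1 ≤ N)
    (σ : Fin (2 * (2 * N)) → ℝ) (hσ : IsDyck σ)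
    (hslope : ∀ j : Fin (2 * N),
      σ ⟨2 * j.val, by have := j.2; omega⟩ = σ ⟨2 * j.val + 1, by have := j.2; omega⟩)
    (y : Fin (2 * N) → ℝ) (hy : y ∈ chamber (2 * N)) :
    IsDyck (fun k : Fin (2 * N) => σ ⟨2 * k.val + 1, by have := k.2; omega⟩) ∧
    Tendsto (fun x => cblock σ x / fuseDenom x)
      (𝓝[chamber (2 * (2 * N))] dup y)
      (𝓝 (∏ p ∈ univ.filter (fun p : Fin (2 * N) × Fin (2 * N) => p.1 < p.2),
        (y p.2 - y p.1) ^
          (2 * σ ⟨2 * p.1.val + 1, by have := p.1.2; omega⟩ *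
            σ ⟨2 * p.2.val + 1, by have := p.2.2; omega⟩))) := by
  have hslope' : ∀ s : Fin (2 * N), σ (blockFst s) = σ (blockSnd s) := hslope
  refine ⟨isDyck_half hσ hslope', ?_⟩
  have hlim : Tendsto
      (fun x => ∏ p ∈ univ.filter (fun p : Fin (2 * N) × Fin (2 * N) => p.1 < p.2),
        crossFactor σ x p) (𝓝[chamber (2 * (2 * N))] dup y)
      (𝓝 (∏ p ∈ univ.filter (fun p : Fin (2 * N) × Fin (2 * N) => p.1 < p.2),
        (y p.2 - y p.1) ^ (2 * σ (blockSnd p.1) * σ (blockSnd p.2)))) := by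
    refine tendsto_finsetProd _ fun p hp => ?_
    refine (tendsto_crossFactor hslope' (fun s => ?_) (fun s => ?_) p
      (hy _ _ (Finset.mem_filter.1 hp).2)).mono_left nhdsWithin_le_nhds
    · exact congrArg y (Fin.ext (by simp only [blockFst]; omega))
    · exact congrArg y (Fin.ext (by simp only [blockSnd]; omega))
  refine hlim.congr' ?_
  filter_upwards [self_mem_nhdsWithin] with x hx
  have hbase : ∀ s : Fin (2 * N), 0 < x (blockSnd s) - x (blockFst s) := fun s =>
    sub_pos.2 (hx _ _ (by simp [blockFst, blockSnd, Fin.lt_def]))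
  have hsq : ∀ s : Fin (2 * N), σ (blockFst s) * σ (blockSnd s) / 2 = 1 / 2 := by
    intro s
    rw [hslope']
    rcases hσ.1 (blockSnd s) with h | h <;> rw [h] <;> norm_num
  have hden : fuseDenom x = ∏ s : Fin (2 * N),
      (x (blockSnd s) - x (blockFst s)) ^ (σ (blockFst s) * σ (blockSnd s) / 2) := by
    simp only [hsq]
    rfl
  have hne : fuseDenom x ≠ 0 := by
    rw [hden]
    exact Finset.prod_ne_zero_iff.2 fun s _ => (Real.rpow_pos_of_pos (hbase s) _).ne'
  rw [cblock_eq, ← hden, mul_div_cancel_left₀ _ hne]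
end
end

section
/- Let N ≥ 1 and let ω := {{4j+1,4j+4} : 0≤j≤N−1} ∪ {{4j+2,4j+3} : 0≤j≤N−1}, which is a planar pair partition of {1,…,4N}. Then for every planar pair partition β of {1,…,4N} with ω ⟵ β, and for every j ∈ {1,…,2N}, the link {2j−1,2j} does not belong to β. -/
open Filter Finset
open scoped BigOperators Classical Topology

noncomputable section

/-- For `ω = {{4j+1,4j+4}, {4j+2,4j+3} : 0 ≤ j ≤ N-1}` (1-based;
here 0-based `{4j,4j+3}, {4j+1,4j+2}`), every `β` with `ω ⟵ β` contains no link of the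
form `{2j-1, 2j}`. -/
theorem kwRel_omega_noFuseLink (N : ℕ) (hN : 1 ≤ N)
    (ω : PlanarPair (2 * N))
    (hω : ∀ j : Fin N,
      ω.val ⟨4 * j.val, by have := j.2; omega⟩ = ⟨4 * j.val + 3, by have := j.2; omega⟩ ∧
      ω.val ⟨4 * j.val + 1, by have := j.2; omega⟩ = ⟨4 * j.val + 2, by have := j.2; omega⟩)
    (β : PlanarPair (2 * N)) (hβ : kwRel ω β) :
    noFuseLink β := by
  intro j hj
  have hrel := hβ ⟨2 * j.val, by have := j.2; omega⟩
  rw [hj] at hrel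
  -- The points `2j` and `2j+1` are both openers of `ω` (`j` even) or both closers of `ω` (`j` odd),
  -- whereas a link of `β` joins an opener to a closer.
  rcases Nat.even_or_odd' j.val with ⟨k, hk | hk⟩
  · have hkN : k < N := by have := j.2; omega
    obtain ⟨h0, h1⟩ := hω ⟨k, hkN⟩
    have e0 : (⟨2 * j.val, by have := j.2; omega⟩ : Fin (2 * (2 * N))) =
        ⟨4 * k, by omega⟩ := Fin.ext (by simp only; omega)
    have e1 : (⟨2 * j.val + 1, by have := j.2; omega⟩ : Fin (2 * (2 * N))) =
        ⟨4 * k + 1, by omega⟩ := Fin.ext (by simp only; omega)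
    rw [e0, e1, h0, h1] at hrel
    simp only [Fin.mk_lt_mk] at hrel
    omega
  · have hkN : k < N := by have := j.2; omega
    obtain ⟨h0, h1⟩ := hω ⟨k, hkN⟩
    have h3 := ω.2.1 ⟨4 * k, by omega⟩
    have h2 := ω.2.1 ⟨4 * k + 1, by omega⟩
    rw [h0] at h3
    rw [h1] at h2
    have e0 : (⟨2 * j.val, by have := j.2; omega⟩ : Fin (2 * (2 * N))) =
        ⟨4 * k + 2, by omega⟩ := Fin.ext (by simp only; omega)
    have e1 : (⟨2 * j.val + 1, by have := j.2; omega⟩ : Fin (2 * (2 * N))) =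
        ⟨4 * k + 3, by omega⟩ := Fin.ext (by simp only; omega)
    rw [e0, e1, h2, h3] at hrel
    simp only [Fin.mk_lt_mk] at hrel
    omega
end
end

section
/- Let i ≥ 1 be an integer, let Z_1,…,Z_{i+1} be real numbers, and let w_1,…,w_{i+1} be pairwise distinct real numbers. Then Σ_{m=0}^{⌊(i+1)/2⌋} Σ_{τ ∈ J_{i+1}^m} 2^m · (∏_{k=2m+1}^{i+1} Z_{τ(k)}) / ∏_{k=1}^{m}(w_{τ(2k−1)}−w_{τ(2k)})² = Σ_{m=0}^{⌊i/2⌋} Σ_{σ ∈ J_i^m} [ 2^m · (∏_{k=2m+1}^{i} Z_{σ(k)}) · Z_{i+1} / ∏_{k=1}^{m}(w_{σ(2k−1)}−w_{σ(2k)})² + Σ_{r=2m+1}^{i} 2^{m+1} · (∏_{k=2m+1, k≠r}^{i} Z_{σ(k)}) / ( (w_{i+1}−w_{σ(r)})² · ∏_{k=1}^{m}(w_{σ(2k−1)}−w_{σ(2k)})² ) ] (empty products equal 1). -/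
/-!
Both sides are sums over involutions. A permutation `σ ∈ J_n^m` encodes the involution of
`{1, …, n}` whose two-cycles are `{σ(2k-1), σ(2k)}`, `k ≤ m`, and whose fixed points are the
`σ(k)` with `k > 2m`; the three monotonicity conditions select exactly one encoding of each
involution, so the double sum over `m` and `J_n^m` is a sum over all involutions
(`sum_Jset_eq_sum_invols`). The summand only depends on the involution `f`: it is
`∏ a, φ(a, f a)`, where `φ(a, a) = Z_a`, `φ(a, b) = 2 / (w_a - w_b)²` if `a < b`, and
`φ(a, b) = 1` if `a > b` (`term_eq_prod_phi`).

The identity is then the recursion for involutions of `{1, …, i + 1}`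
(`sum_invols_succ`): removing the last point leaves an involution of `{1, …, i}`, and the last
point was either fixed or paired with a point `a` that becomes a fixed point. In terms of
products the first case contributes the factor `Z_{i+1}` (`prod_phi_extFix`), and the second
replaces `Z_a` by `2 / (w_{i+1} - w_a)²` (`prod_phi_extPair`).
-/

open Filter Finset
open scoped BigOperators Classical Topology

noncomputable section

/-! ### Involutions and the permutations in `Jset` -/

/-- The involutions of `Fin n`, fixed points allowed. -/
def invols (n : ℕ) : Finset (Fin n → Fin n) := univ.filter fun f => ∀ a, f (f a) = a

lemma mem_invols {n : ℕ} {f : Fin n → Fin n} : f ∈ invols n ↔ ∀ a, f (f a) = a := by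
  simp [invols]

/-- The involution exchanging `2k` and `2k + 1` for `k < m` and fixing every other point. The
guard `k + 1 < n` is automatic when `2 * m ≤ n`. -/
def stdInv (n m : ℕ) (k : Fin n) : Fin n :=
  if h : k.val % 2 = 0 ∧ k.val + 1 < n ∧ k.val < 2 * m then ⟨k.val + 1, h.2.1⟩
  else if k.val % 2 = 1 ∧ k.val < 2 * m then ⟨k.val - 1, by omega⟩
  else k

lemma stdInv_val {n m : ℕ} (hm : 2 * m ≤ n) (k : Fin n) :
    (stdInv n m k).val = if k.val < 2 * m then
      (if k.val % 2 = 0 then k.val + 1 else k.val - 1) else k.val := by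
  unfold stdInv
  have := k.2
  split_ifs <;> simp_all
  omega

lemma stdInv_stdInv {n m : ℕ} (hm : 2 * m ≤ n) (k : Fin n) :
    stdInv n m (stdInv n m k) = k := by
  apply Fin.ext
  rw [stdInv_val hm, stdInv_val hm]
  split_ifs <;> omega

/-- The involution encoded by `σ`: `stdInv` transported along `σ`. -/
def conjInv {n : ℕ} (m : ℕ) (σ : Equiv.Perm (Fin n)) (a : Fin n) : Fin n :=
  σ (stdInv n m (σ.symm a))

lemma conjInv_apply {n m : ℕ} (σ : Equiv.Perm (Fin n)) (k : Fin n) :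
    conjInv m σ (σ k) = σ (stdInv n m k) := by
  simp [conjInv]

lemma conjInv_mem {n m : ℕ} (hm : 2 * m ≤ n) (σ : Equiv.Perm (Fin n)) :
    conjInv m σ ∈ invols n := by
  simp [mem_invols, conjInv, stdInv_stdInv hm]

lemma fsucc_val {n m : ℕ} (hm : 2 * m ≤ n) (k : Fin n) (h0 : k.val % 2 = 0)
    (h : k.val < 2 * m) : (fsucc k).val = k.val + 1 := by
  unfold fsucc
  rw [dif_pos (by omega)]

lemma fsucc_eq_stdInv {n m : ℕ} (hm : 2 * m ≤ n) (k : Fin n) (h0 : k.val % 2 = 0)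
    (h : k.val < 2 * m) : fsucc k = stdInv n m k := by
  apply Fin.ext
  rw [fsucc_val hm k h0 h, stdInv_val hm, if_pos h, if_pos h0]

/-- In the two-cycles encoded by `σ ∈ J_n^m`, the smaller elements sit at the even positions. -/
lemma lt_conjInv_iff {n m : ℕ} (hm : 2 * m ≤ n) {σ : Equiv.Perm (Fin n)} (hσ : σ ∈ Jset n m)
    (k : Fin n) : σ k < σ (stdInv n m k) ↔ k.val % 2 = 0 ∧ k.val < 2 * m := by
  simp only [Jset, mem_filter, mem_univ, true_and] at hσ
  obtain ⟨-, h2, -⟩ := hσ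
  constructor
  · intro h
    by_contra hk
    by_cases hlt : k.val < 2 * m
    · have hodd : k.val % 2 = 1 := by omega
      have hv : (stdInv n m k).val = k.val - 1 := by
        rw [stdInv_val hm, if_pos hlt, if_neg (by omega)]
      have := h2 (stdInv n m k) (by omega) (by omega)
      rw [fsucc_eq_stdInv hm _ (by omega) (by omega), stdInv_stdInv hm] at this
      exact lt_asymm h this
    · have : stdInv n m k = k := Fin.ext (by rw [stdInv_val hm, if_neg hlt])
      rw [this] at h
      exact lt_irrefl _ h
  · rintro ⟨h0, h⟩
    rw [← fsucc_eq_stdInv hm k h0 h]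
    exact h2 k h0 h

lemma stdInv_eq_self_iff {n m : ℕ} (hm : 2 * m ≤ n) (k : Fin n) :
    stdInv n m k = k ↔ 2 * m ≤ k.val := by
  rw [Fin.ext_iff, stdInv_val hm]
  split_ifs <;> omega

lemma card_even_positions {n m : ℕ} (hm : 2 * m ≤ n) :
    (univ.filter fun e : Fin n => e.val % 2 = 0 ∧ e.val < 2 * m).card = m := by
  have : (univ.filter fun e : Fin n => e.val % 2 = 0 ∧ e.val < 2 * m).card
      = (univ : Finset (Fin m)).card := by
    symm
    refine Finset.card_bij (fun j _ => (⟨2 * j.val, by omega⟩ : Fin n)) ?_ ?_ ?_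
    · intro j _
      simp
    · intro j _ j' _ h
      simp only [Fin.mk.injEq] at h
      exact Fin.ext (by omega)
    · intro e he
      simp only [mem_filter, mem_univ, true_and] at he
      exact ⟨⟨e.val / 2, by omega⟩, mem_univ _, Fin.ext (by simp; omega)⟩
  rw [this, card_univ, Fintype.card_fin]

/-- The number of two-cycles of the encoded involution determines `m`. -/
lemma card_lt_conjInv {n m : ℕ} (hm : 2 * m ≤ n) {σ : Equiv.Perm (Fin n)} (hσ : σ ∈ Jset n m) :
    (univ.filter fun a => a < conjInv m σ a).card = m := by
  refine Eq.trans (Eq.symm ?_) (card_even_positions hm)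
  refine Finset.card_bij (fun k _ => σ k) ?_ (fun _ _ _ _ h => σ.injective h) ?_
  · intro k hk
    simpa [conjInv_apply, lt_conjInv_iff hm hσ] using hk
  · intro a ha
    refine ⟨σ.symm a, ?_, by simp⟩
    rw [← σ.apply_symm_apply a] at ha
    simpa only [conjInv_apply, lt_conjInv_iff hm hσ, mem_filter, mem_univ, true_and] using ha

/-- The position in `Fin n` of the opening element of the `j`-th pair. -/
def openPos {n m : ℕ} (hm : 2 * m ≤ n) (j : Fin m) : Fin n := ⟨2 * j.val, by omega⟩

/-- The position in `Fin n` of the `j`-th fixed point. -/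
def fixPos {n m : ℕ} (j : Fin (n - 2 * m)) : Fin n := ⟨2 * m + j.val, by omega⟩

lemma range_open {n m : ℕ} (hm : 2 * m ≤ n) {σ : Equiv.Perm (Fin n)} (hσ : σ ∈ Jset n m) :
    Set.range (fun j : Fin m => σ (openPos hm j)) = {a | a < conjInv m σ a} := by
  ext a
  obtain ⟨k, rfl⟩ := σ.surjective a
  simp only [Set.mem_range, Set.mem_ofPred_eq, conjInv_apply, lt_conjInv_iff hm hσ,
    EmbeddingLike.apply_eq_iff_eq]
  constructor
  · rintro ⟨j, rfl⟩
    simp [openPos]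
  · rintro ⟨h0, h⟩
    exact ⟨⟨k.val / 2, by omega⟩, Fin.ext (by simp [openPos]; omega)⟩

lemma range_fix {n m : ℕ} (hm : 2 * m ≤ n) (σ : Equiv.Perm (Fin n)) :
    Set.range (fun j : Fin (n - 2 * m) => σ (fixPos j)) = {a | conjInv m σ a = a} := by
  ext a
  obtain ⟨k, rfl⟩ := σ.surjective a
  simp only [Set.mem_range, Set.mem_ofPred_eq, conjInv_apply, stdInv_eq_self_iff hm,
    EmbeddingLike.apply_eq_iff_eq]
  constructor
  · rintro ⟨j, rfl⟩
    simp [fixPos]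
  · intro h
    exact ⟨⟨k.val - 2 * m, by omega⟩, Fin.ext (by simp [fixPos]; omega)⟩

/-- An involution has at most one encoding: the openers and the fixed points are enumerated
increasingly, hence determined by their sets, and the closers are the images of the openers. -/
lemma conjInv_inj {n m : ℕ} (hm : 2 * m ≤ n) {σ τ : Equiv.Perm (Fin n)} (hσ : σ ∈ Jset n m)
    (hτ : τ ∈ Jset n m) (h : conjInv m σ = conjInv m τ) : σ = τ := by
  have mono_open : ∀ ρ ∈ Jset n m, StrictMono fun j : Fin m => ρ (openPos hm j) := by
    intro ρ hρ j j' hj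
    simp only [Jset, mem_filter, mem_univ, true_and] at hρ
    have : j.val < j'.val := hj
    exact hρ.1 _ _ (by simp [openPos]) (by simp [openPos]) (by simp [openPos]; omega)
      (by simp [openPos])
  have mono_fix : ∀ ρ ∈ Jset n m, StrictMono fun j : Fin (n - 2 * m) => ρ (fixPos j) := by
    intro ρ hρ j j' hj
    simp only [Jset, mem_filter, mem_univ, true_and] at hρ
    have : j.val < j'.val := hj
    exact hρ.2.2 _ _ (by simp [fixPos]) (by simp [fixPos]; omega)
  have e1 : (fun j : Fin m => σ (openPos hm j)) = fun j => τ (openPos hm j) :=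
    ((mono_open σ hσ).range_inj (mono_open τ hτ)).1 (by rw [range_open hm hσ, range_open hm hτ, h])
  have e2 : (fun j : Fin (n - 2 * m) => σ (fixPos j)) = fun j => τ (fixPos j) :=
    ((mono_fix σ hσ).range_inj (mono_fix τ hτ)).1 (by rw [range_fix hm, range_fix hm, h])
  have even : ∀ k : Fin n, k.val % 2 = 0 → k.val < 2 * m → σ k = τ k := by
    intro k h0 hk
    have := congrFun e1 ⟨k.val / 2, by omega⟩
    have hk' : openPos hm ⟨k.val / 2, by omega⟩ = k := Fin.ext (by simp [openPos]; omega)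
    simpa only [hk'] using this
  ext1 k
  by_cases hk : k.val < 2 * m
  · rcases Nat.mod_two_eq_zero_or_one k.val with h0 | h1
    · exact even k h0 hk
    · have hv : (stdInv n m k).val = k.val - 1 := by
        rw [stdInv_val hm, if_pos hk, if_neg (by omega)]
      have := even (stdInv n m k) (by omega) (by omega)
      rw [← stdInv_stdInv hm k, ← conjInv_apply, ← conjInv_apply (k := stdInv n m k), this, h]
  · have := congrFun e2 ⟨k.val - 2 * m, by omega⟩
    have hk' : fixPos (m := m) ⟨k.val - 2 * m, by omega⟩ = k := Fin.ext (by simp [fixPos]; omega)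
    simpa only [hk'] using this

/-- Openers and closers of an involution are equinumerous. -/
lemma card_invol {n : ℕ} {f : Fin n → Fin n} (hf : ∀ a, f (f a) = a) :
    2 * (univ.filter fun a => a < f a).card + (univ.filter fun a => f a = a).card = n := by
  have hAB : (univ.filter fun a => a < f a).card = (univ.filter fun a => f a < a).card :=
    Finset.card_bij (fun a _ => f a) (by simp [hf])
      (fun a _ b _ h => by rw [← hf a, h, hf b])
      (fun b hb => ⟨f b, by simpa [hf] using hb, hf b⟩)
  have h1 := Finset.card_filter_add_card_filter_not (s := (univ : Finset (Fin n)))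
    (fun a => a < f a)
  have h2 := Finset.card_filter_add_card_filter_not
    (s := univ.filter fun a : Fin n => ¬ a < f a) (fun a => f a = a)
  rw [filter_filter, filter_filter] at h2
  have e1 : (univ.filter fun a => ¬ a < f a ∧ f a = a) = univ.filter fun a => f a = a := by
    ext a
    simp only [mem_filter, mem_univ, true_and]
    exact ⟨fun h => h.2, fun h => ⟨by rw [h]; exact lt_irrefl _, h⟩⟩
  have e2 : (univ.filter fun a => ¬ a < f a ∧ ¬ f a = a) = univ.filter fun a => f a < a := by
    ext a
    simp only [mem_filter, mem_univ, true_and]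
    exact ⟨fun h => lt_of_le_of_ne (not_lt.1 h.1) h.2, fun h => ⟨not_lt.2 h.le, h.ne⟩⟩
  rw [e1, e2] at h2
  simp only [card_univ, Fintype.card_fin] at h1
  omega

/-- Every involution has an encoding: list the openers increasingly, each followed by its
partner, and then the fixed points increasingly. -/
lemma exists_conjInv {n : ℕ} {f : Fin n → Fin n} (hf : f ∈ invols n) :
    ∃ m, 2 * m ≤ n ∧ ∃ σ ∈ Jset n m, conjInv m σ = f := by
  rw [mem_invols] at hf
  have hcard := card_invol hf
  obtain ⟨m, hmA⟩ : ∃ m, (univ.filter fun a => a < f a).card = m := ⟨_, rfl⟩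
  have hm : 2 * m ≤ n := by omega
  have hF : (univ.filter fun a => f a = a).card = n - 2 * m := by omega
  set eA := (univ.filter fun a => a < f a).orderEmbOfFin hmA
  set eF := (univ.filter fun a => f a = a).orderEmbOfFin hF
  have hA : ∀ j, eA j < f (eA j) := fun j => by
    exact (mem_filter.1 ((univ.filter fun a => a < f a).orderEmbOfFin_mem hmA j)).2
  have hFx : ∀ j, f (eF j) = eF j := fun j => by
    exact (mem_filter.1 ((univ.filter fun a => f a = a).orderEmbOfFin_mem hF j)).2
  let t : Fin n → Fin n := fun k =>
    if h : k.val < 2 * m then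
      (if k.val % 2 = 0 then eA ⟨k.val / 2, by omega⟩ else f (eA ⟨k.val / 2, by omega⟩))
    else eF ⟨k.val - 2 * m, by omega⟩
  have t0 : ∀ (k : Fin n) (h : k.val < 2 * m), k.val % 2 = 0 →
      t k = eA ⟨k.val / 2, by omega⟩ := fun k h h0 => by simp [t, h, h0]
  have t1 : ∀ (k : Fin n) (h : k.val < 2 * m), k.val % 2 = 1 →
      t k = f (eA ⟨k.val / 2, by omega⟩) := fun k h h0 => by simp [t, h, h0]
  have t2 : ∀ (k : Fin n) (h : ¬ k.val < 2 * m),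
      t k = eF ⟨k.val - 2 * m, by omega⟩ := fun k h => by simp [t, h]
  have ht : ∀ k, t (stdInv n m k) = f (t k) := by
    intro k
    have hv := stdInv_val hm k
    by_cases hk : k.val < 2 * m
    · rw [if_pos hk] at hv
      rcases Nat.mod_two_eq_zero_or_one k.val with h0 | h0
      · rw [if_pos h0] at hv
        rw [t0 k hk h0, t1 _ (by omega) (by omega)]
        congr 3
        omega
      · rw [if_neg (by omega)] at hv
        rw [t1 k hk h0, t0 _ (by omega) (by omega), hf]
        congr 2
        omega
    · rw [if_neg hk] at hv
      rw [Fin.ext hv, t2 k hk, hFx]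
  -- The three kinds of positions are told apart by comparing `t k` with `f (t k)`.
  have ht_lt : ∀ k, t k < f (t k) ↔ k.val % 2 = 0 ∧ k.val < 2 * m := by
    intro k
    by_cases hk : k.val < 2 * m
    · rcases Nat.mod_two_eq_zero_or_one k.val with h0 | h0
      · rw [t0 k hk h0]
        simp [hA, hk, h0]
      · rw [t1 k hk h0, hf]
        simp [h0, (hA _).le]
    · rw [t2 k hk, hFx]
      simp [hk]
  have ht_fix : ∀ k, f (t k) = t k ↔ ¬ k.val < 2 * m := by
    intro k
    by_cases hk : k.val < 2 * m
    · rcases Nat.mod_two_eq_zero_or_one k.val with h0 | h0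
      · rw [t0 k hk h0]
        simp [(hA _).ne', hk]
      · rw [t1 k hk h0, hf]
        simp [(hA _).ne, hk]
    · rw [t2 k hk, hFx]
      simp [hk]
  have ht_inj : Function.Injective t := by
    intro k l hkl
    have a1 := ht_lt k
    have a2 := ht_fix k
    rw [hkl] at a1 a2
    have b1 := a1.symm.trans (ht_lt l)
    have b2 := a2.symm.trans (ht_fix l)
    apply Fin.ext
    by_cases hk : k.val < 2 * m
    · have hl : l.val < 2 * m := by tauto
      rcases Nat.mod_two_eq_zero_or_one k.val with h0 | h0
      · have hl0 : l.val % 2 = 0 := by tauto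
        rw [t0 k hk h0, t0 l hl hl0] at hkl
        have := congrArg Fin.val (eA.injective hkl)
        simp only at this
        omega
      · have hl0 : l.val % 2 = 1 := by omega
        rw [t1 k hk h0, t1 l hl hl0] at hkl
        have := congrArg f hkl
        rw [hf, hf] at this
        have := congrArg Fin.val (eA.injective this)
        simp only at this
        omega
    · have hl : ¬ l.val < 2 * m := by tauto
      rw [t2 k hk, t2 l hl] at hkl
      have := congrArg Fin.val (eF.injective hkl)
      simp only at this
      omega
  refine ⟨m, hm, Equiv.ofBijective t (Finite.injective_iff_bijective.1 ht_inj), ?_, ?_⟩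
  · simp only [Jset, mem_filter, mem_univ, true_and, Equiv.ofBijective_apply]
    refine ⟨?_, ?_, ?_⟩
    · intro k l hk hl hkl hlm
      rw [t0 k (by omega) hk, t0 l hlm hl]
      exact eA.strictMono (Fin.mk_lt_mk.2 (by omega))
    · intro k hk hkm
      rw [fsucc_eq_stdInv hm k hk hkm, ht, ht_lt]
      exact ⟨hk, hkm⟩
    · intro k l hk hkl
      rw [t2 k (by omega), t2 l (by omega)]
      exact eF.strictMono (Fin.mk_lt_mk.2 (by omega))
  · funext a
    obtain ⟨k, rfl⟩ := (Equiv.ofBijective t (Finite.injective_iff_bijective.1 ht_inj)).surjective a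
    rw [conjInv_apply]
    exact ht k

lemma sum_Jset_eq_sum_invols (n : ℕ) (F : (Fin n → Fin n) → ℝ) :
    ∑ m ∈ Finset.range (n / 2 + 1), ∑ σ ∈ Jset n m, F (conjInv m σ) = ∑ f ∈ invols n, F f := by
  rw [Finset.sum_sigma']
  refine Finset.sum_bij (fun p _ => conjInv p.1 p.2) ?_ ?_ ?_ (fun _ _ => rfl)
  · rintro ⟨m, σ⟩ h
    simp only [mem_sigma, mem_range] at h
    have hm : 2 * m ≤ n := by omega
    exact conjInv_mem hm σ
  · rintro ⟨m, σ⟩ h ⟨m', τ⟩ h' heq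
    simp only [mem_sigma, mem_range] at h h' heq
    have hmm : m = m' := by
      rw [← card_lt_conjInv (by omega) h.2, ← card_lt_conjInv (by omega) h'.2, heq]
    subst hmm
    rw [conjInv_inj (by omega) h.2 h'.2 heq]
  · intro f hf
    obtain ⟨m, hm, σ, hσ, h⟩ := exists_conjInv hf
    exact ⟨⟨m, σ⟩, by simp only [mem_sigma, mem_range]; exact ⟨by omega, hσ⟩, h⟩

/-! ### The recursion for involutions -/

/-- Extension of `f` to one more point, which is fixed. -/
def extFix {n : ℕ} (f : Fin n → Fin n) : Fin (n + 1) → Fin (n + 1) :=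
  Fin.lastCases (Fin.last n) fun a => (f a).castSucc

/-- Extension of `f` to one more point, which is paired with `r`. -/
def extPair {n : ℕ} (f : Fin n → Fin n) (r : Fin n) : Fin (n + 1) → Fin (n + 1) :=
  Fin.lastCases r.castSucc fun a => if a = r then Fin.last n else (f a).castSucc

@[simp] lemma extFix_last {n : ℕ} (f : Fin n → Fin n) : extFix f (Fin.last n) = Fin.last n := by
  simp [extFix]

@[simp] lemma extFix_castSucc {n : ℕ} (f : Fin n → Fin n) (a : Fin n) :
    extFix f a.castSucc = (f a).castSucc := by
  simp [extFix]

@[simp] lemma extPair_last {n : ℕ} (f : Fin n → Fin n) (r : Fin n) :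
    extPair f r (Fin.last n) = r.castSucc := by
  simp [extPair]

@[simp] lemma extPair_castSucc {n : ℕ} (f : Fin n → Fin n) (r a : Fin n) :
    extPair f r a.castSucc = if a = r then Fin.last n else (f a).castSucc := by
  simp [extPair]

lemma extFix_mem {n : ℕ} {f : Fin n → Fin n} (hf : f ∈ invols n) : extFix f ∈ invols (n + 1) := by
  rw [mem_invols] at hf ⊢
  intro a
  induction a using Fin.lastCases <;> simp [hf]

lemma extPair_mem {n : ℕ} {f : Fin n → Fin n} (hf : f ∈ invols n) {r : Fin n} (hr : f r = r) :
    extPair f r ∈ invols (n + 1) := by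
  rw [mem_invols] at hf ⊢
  intro a
  induction a using Fin.lastCases with
  | last => simp
  | cast a =>
    by_cases h : a = r
    · simp [h]
    · have : f a ≠ r := fun h' => h (by rw [← hf a, h', hr])
      simp [h, this, hf]

lemma extFix_inj {n : ℕ} {f g : Fin n → Fin n} (h : extFix f = extFix g) : f = g := by
  funext a
  simpa using congrFun h a.castSucc

lemma extPair_inj {n : ℕ} {f g : Fin n → Fin n} {r s : Fin n} (hf : f r = r) (hg : g s = s)
    (h : extPair f r = extPair g s) : f = g ∧ r = s := by
  have hrs : r = s := by simpa using congrFun h (Fin.last n)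
  subst hrs
  refine ⟨funext fun a => ?_, rfl⟩
  by_cases ha : a = r
  · rw [ha, hf, hg]
  · simpa [ha] using congrFun h a.castSucc

lemma exists_ext {n : ℕ} {g : Fin (n + 1) → Fin (n + 1)} (hg : g ∈ invols (n + 1)) :
    ∃ f ∈ invols n, extFix f = g ∨ ∃ r, f r = r ∧ extPair f r = g := by
  rw [mem_invols] at hg
  have hlast : ∀ x, g x = Fin.last n ↔ x = g (Fin.last n) := fun x =>
    ⟨fun h => by rw [← h, hg], fun h => by rw [h, hg]⟩
  -- Restrict `g`, turning the partner of the last point (if there is one) into a fixed point.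
  let f : Fin n → Fin n := fun a =>
    if h : g a.castSucc = Fin.last n then a else (g a.castSucc).castPred h
  have f1 : ∀ a, g a.castSucc = Fin.last n → f a = a := fun a h => by simp [f, h]
  have f2 : ∀ a, g a.castSucc ≠ Fin.last n → (f a).castSucc = g a.castSucc := fun a h => by
    simp [f, h]
  refine ⟨f, ?_, ?_⟩
  · rw [mem_invols]
    intro a
    by_cases h : g a.castSucc = Fin.last n
    · rw [f1 a h, f1 a h]
    · have h' : g (f a).castSucc ≠ Fin.last n := by
        rw [f2 a h, hg]
        exact Fin.castSucc_ne_last a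
      apply Fin.castSucc_injective
      rw [f2 _ h', f2 a h, hg]
  · by_cases hl : g (Fin.last n) = Fin.last n
    · left
      funext a
      induction a using Fin.lastCases with
      | last => simp [hl]
      | cast a =>
        rw [extFix_castSucc, f2]
        rw [Ne, hlast, hl]
        exact Fin.castSucc_ne_last a
    · right
      obtain ⟨r, hr⟩ := Fin.exists_castSucc_eq.2 hl
      have hgr : g r.castSucc = Fin.last n := by rw [hr, hg]
      refine ⟨r, f1 r hgr, ?_⟩
      funext a
      induction a using Fin.lastCases with
      | last => simp [hr]
      | cast a =>
        rw [extPair_castSucc]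
        split_ifs with h
        · rw [h, hgr]
        · apply f2
          rw [Ne, hlast, ← hr]
          exact fun h' => h (Fin.castSucc_injective _ h')

lemma sum_invols_succ (n : ℕ) (F : (Fin (n + 1) → Fin (n + 1)) → ℝ) :
    ∑ g ∈ invols (n + 1), F g =
      ∑ f ∈ invols n, (F (extFix f) + ∑ r ∈ univ.filter (fun r => f r = r), F (extPair f r)) := by
  have hdisj : Disjoint ((invols n).image extFix)
      (((invols n).sigma fun f => univ.filter fun r => f r = r).image
        fun p => extPair p.1 p.2) := by
    rw [Finset.disjoint_left]
    intro g h1 h2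
    obtain ⟨f, -, rfl⟩ := mem_image.1 h1
    obtain ⟨p, -, h⟩ := mem_image.1 h2
    have := congrFun h (Fin.last n)
    simp only [extPair_last, extFix_last] at this
    exact Fin.castSucc_ne_last _ this
  have hunion : invols (n + 1) = (invols n).image extFix ∪
      (((invols n).sigma fun f => univ.filter fun r => f r = r).image
        fun p => extPair p.1 p.2) := by
    ext g
    simp only [mem_union, mem_image, mem_sigma, mem_filter, mem_univ, true_and]
    constructor
    · intro hg
      obtain ⟨f, hf, h | ⟨r, hr, h⟩⟩ := exists_ext hg
      · exact Or.inl ⟨f, hf, h⟩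
      · exact Or.inr ⟨⟨f, r⟩, ⟨hf, hr⟩, h⟩
    · rintro (⟨f, hf, rfl⟩ | ⟨p, ⟨hf, hr⟩, rfl⟩)
      · exact extFix_mem hf
      · exact extPair_mem hf hr
  rw [hunion, sum_union hdisj, sum_add_distrib, sum_sigma', sum_image, sum_image]
  · rintro ⟨f, r⟩ hp ⟨g, s⟩ hq h
    simp only [coe_sigma, Set.mem_sigma_iff, mem_coe, mem_filter, mem_univ, true_and] at hp hq
    obtain ⟨rfl, rfl⟩ := extPair_inj hp.2 hq.2 h
    rfl
  · intro f _ g _ h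
    exact extFix_inj h

/-! ### The summands as products over points -/

/-- The contribution of a point `a` whose image under the involution is `b`; a two-cycle is
accounted for at its smaller element. -/
def phi {n : ℕ} (Z w : Fin n → ℝ) (a b : Fin n) : ℝ :=
  if a = b then Z a else if a < b then 2 / (w a - w b) ^ 2 else 1

lemma term_eq_prod_phi {n m : ℕ} (hm : 2 * m ≤ n) (Z w : Fin n → ℝ) {σ : Equiv.Perm (Fin n)}
    (hσ : σ ∈ Jset n m) :
    (2 : ℝ) ^ m * (∏ k ∈ univ.filter (fun k : Fin n => 2 * m ≤ k.val), Z (σ k)) /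
        ∏ e ∈ univ.filter (fun e : Fin n => e.val % 2 = 0 ∧ e.val < 2 * m),
          (w (σ e) - w (σ (fsucc e))) ^ 2 =
      ∏ a, phi Z w a (conjInv m σ a) := by
  have h2 : (2 : ℝ) ^ m =
      ∏ _e ∈ univ.filter (fun e : Fin n => e.val % 2 = 0 ∧ e.val < 2 * m), (2 : ℝ) := by
    rw [prod_const, card_even_positions hm]
  rw [h2, mul_comm, mul_div_assoc, ← prod_div_distrib, prod_filter, prod_filter,
    ← prod_mul_distrib, ← Equiv.prod_comp σ (fun a => phi Z w a (conjInv m σ a))]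
  refine prod_congr rfl fun k _ => ?_
  rw [conjInv_apply]
  unfold phi
  have hlt := lt_conjInv_iff hm hσ k
  have heq : σ k = σ (stdInv n m k) ↔ 2 * m ≤ k.val := by
    rw [σ.injective.eq_iff, eq_comm, stdInv_eq_self_iff hm]
  simp only [hlt, heq]
  by_cases h1 : 2 * m ≤ k.val
  · simp [h1, not_lt.2 h1]
  · by_cases h3 : k.val % 2 = 0 ∧ k.val < 2 * m
    · simp [h1, h3, fsucc_eq_stdInv hm k h3.1 h3.2]
    · simp [h1, h3]

lemma phi_castSucc {n : ℕ} (Z w : Fin (n + 1) → ℝ) (a b : Fin n) :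
    phi Z w a.castSucc b.castSucc =
      phi (fun a => Z a.castSucc) (fun a => w a.castSucc) a b := by
  simp [phi]

lemma prod_phi_extFix {n : ℕ} (Z w : Fin (n + 1) → ℝ) (f : Fin n → Fin n) :
    ∏ a, phi Z w a (extFix f a) =
      (∏ a, phi (fun a => Z a.castSucc) (fun a => w a.castSucc) a (f a)) * Z (Fin.last n) := by
  rw [Fin.prod_univ_castSucc]
  simp only [extFix_castSucc, extFix_last, phi_castSucc]
  simp [phi]

/-- Deleting the factor `Z_r` is expressed by resetting `Z_r` to `1`. -/
lemma prod_phi_extPair {n : ℕ} (Z w : Fin (n + 1) → ℝ) (f : Fin n → Fin n) {r : Fin n}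
    (hr : f r = r) :
    ∏ a, phi Z w a (extPair f r a) =
      2 / (w (Fin.last n) - w r.castSucc) ^ 2 *
        ∏ a, phi (Function.update (fun a => Z a.castSucc) r 1) (fun a => w a.castSucc) a (f a) := by
  have h2 : 2 / (w (Fin.last n) - w r.castSucc) ^ 2 =
      ∏ a : Fin n, if a = r then 2 / (w (Fin.last n) - w r.castSucc) ^ 2 else 1 := by
    simp
  rw [h2, ← prod_mul_distrib, Fin.prod_univ_castSucc]
  have hl : phi Z w (Fin.last n) (extPair f r (Fin.last n)) = 1 := by
    simp [phi, (Fin.castSucc_ne_last r).symm, Fin.le_last]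
  rw [hl, mul_one]
  refine prod_congr rfl fun a _ => ?_
  rw [extPair_castSucc]
  by_cases h : a = r
  · subst h
    have hsq : (w (Fin.last n) - w a.castSucc) ^ 2 = (w a.castSucc - w (Fin.last n)) ^ 2 := by
      ring
    simp [phi, hr, hsq, Fin.castSucc_ne_last a, Fin.castSucc_lt_last]
  · simp only [if_neg h, one_mul, phi_castSucc]
    simp [phi, h]

/-- The combinatorial identity (0-based indexing on `Fin (i+1)`;
`Z_{i+1}` and `w_{i+1}` are the values at `Fin.last i`, and permutations of `{1,…,i}`
act on `Fin i`, embedded by `Fin.castSucc`). -/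
theorem fusion_combinatorial_identity (i : ℕ) (hi : 1 ≤ i)
    (Z w : Fin (i + 1) → ℝ) (hw : Function.Injective w) :
    ∑ m ∈ Finset.range ((i + 1) / 2 + 1), ∑ τ ∈ Jset (i + 1) m,
        (2 : ℝ) ^ m *
            (∏ k ∈ univ.filter (fun k : Fin (i + 1) => 2 * m ≤ k.val), Z (τ k)) /
          ∏ e ∈ univ.filter (fun e : Fin (i + 1) => e.val % 2 = 0 ∧ e.val < 2 * m),
            (w (τ e) - w (τ (fsucc e))) ^ 2 =
      ∑ m ∈ Finset.range (i / 2 + 1), ∑ σ ∈ Jset i m,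
        ((2 : ℝ) ^ m *
              (∏ k ∈ univ.filter (fun k : Fin i => 2 * m ≤ k.val),
                Z (Fin.castSucc (σ k))) * Z (Fin.last i) /
            (∏ e ∈ univ.filter (fun e : Fin i => e.val % 2 = 0 ∧ e.val < 2 * m),
              (w (Fin.castSucc (σ e)) - w (Fin.castSucc (σ (fsucc e)))) ^ 2) +
          ∑ r ∈ univ.filter (fun r : Fin i => 2 * m ≤ r.val),
            (2 : ℝ) ^ (m + 1) *
                (∏ k ∈ univ.filter (fun k : Fin i => 2 * m ≤ k.val ∧ k ≠ r),
                  Z (Fin.castSucc (σ k))) /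
              ((w (Fin.last i) - w (Fin.castSucc (σ r))) ^ 2 *
                ∏ e ∈ univ.filter (fun e : Fin i => e.val % 2 = 0 ∧ e.val < 2 * m),
                  (w (Fin.castSucc (σ e)) - w (Fin.castSucc (σ (fsucc e)))) ^ 2)) := by
  have hbound : ∀ m ∈ Finset.range ((i + 1) / 2 + 1), 2 * m ≤ i + 1 := fun m hm => by
    rw [mem_range] at hm
    omega
  refine (sum_congr rfl fun m hm => sum_congr rfl fun τ hτ =>
    term_eq_prod_phi (hbound m hm) Z w hτ).trans ?_
  rw [sum_Jset_eq_sum_invols (i + 1) fun g => ∏ a, phi Z w a (g a), sum_invols_succ,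
    ← sum_Jset_eq_sum_invols]
  refine sum_congr rfl fun m hm => sum_congr rfl fun σ hσ => ?_
  have hm2 : 2 * m ≤ i := by
    rw [mem_range] at hm
    omega
  rw [prod_phi_extFix, ← term_eq_prod_phi hm2 _ _ hσ, div_mul_eq_mul_div]
  congr 1
  symm
  -- The positions `r ≥ 2m` correspond under `σ` to the fixed points of the involution.
  refine sum_bij (fun r _ => σ r) ?_ (fun _ _ _ _ h => σ.injective h) ?_ ?_
  · intro r hr
    simpa [conjInv_apply, stdInv_eq_self_iff hm2] using hr
  · intro a ha
    refine ⟨σ.symm a, ?_, by simp⟩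
    rw [← σ.apply_symm_apply a] at ha
    simpa only [conjInv_apply, σ.injective.eq_iff, stdInv_eq_self_iff hm2, mem_filter, mem_univ,
      true_and] using ha
  · intro r hr
    have hfix : conjInv m σ (σ r) = σ r := by
      simpa [conjInv_apply, stdInv_eq_self_iff hm2] using hr
    rw [prod_phi_extPair Z w _ hfix, ← term_eq_prod_phi hm2 _ _ hσ]
    have hprod : ∏ k ∈ univ.filter (fun k : Fin i => 2 * m ≤ k.val ∧ k ≠ r),
          Z (Fin.castSucc (σ k)) =
        ∏ k ∈ univ.filter (fun k : Fin i => 2 * m ≤ k.val),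
          Function.update (fun a : Fin i => Z a.castSucc) (σ r) 1 (σ k) := by
      rw [← filter_filter, prod_filter]
      refine prod_congr rfl fun k _ => ?_
      by_cases h : k = r <;> simp [Function.update_apply, h]
    rw [hprod, pow_succ, div_mul_div_comm]
    ring
end
end

section
/- Define the six sign sequences on {1,…,8}: σ¹=(+1,+1,−1,−1,+1,+1,−1,−1), σ²=(+1,+1,−1,+1,−1,+1,−1,−1), σ³=(+1,+1,+1,−1,−1,+1,−1,−1), σ⁴=(+1,+1,−1,+1,+1,−1,−1,−1), σ⁵=(+1,+1,+1,−1,+1,−1,−1,−1), σ⁶=(+1,+1,+1,+1,−1,−1,−1,−1), and for n = 1,…,6 set U_n(x_1,…,x_8) = ∏_{1≤i<j≤8}(x_j−x_i)^{σⁿ(i)σⁿ(j)/2} on the chamber x_1<⋯<x_8. Set Z₁ = U₂ − U₃ − U₄ + U₅ − 2U₆, Z₂ = U₆, Z₃ = U₁ − U₂ + U₃ + U₄ − U₅ + U₆. Fix y_1<y_2<y_3<y_4 and let q = (y_2−y_1)(y_4−y_3)/((y_3−y_1)(y_4−y_2)) ∈ (0,1). Then, as x ranges over the chamber x_1<⋯<x_8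 with x_1,x_2 → y_1, x_3,x_4 → y_2, x_5,x_6 → y_3 and x_7,x_8 → y_4 simultaneously: Z₁(x)/U₁(x) → 2q(1−q)(2−q+q²), Z₂(x)/U₁(x) → q⁴, and Z₃(x)/U₁(x) → (1−q)⁴. -/
/-!
Dividing every conformal block by `U₁` turns all exponents into `0`, `1` or `-1`, so on the chamber
the quotients are rational functions of `x` (`div_two`, …, `div_six`). With
`N(t) = (t - x₁)(t - x₂)` and `D(t) = (x₇ - t)(x₈ - t)`, the quotient `U₆ / U₁` is already continuous
at the fusion point, where it equals `q⁴`. The quotients of `U₂, …, U₅` each have a simple pole along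
`x₃ = x₄` and along `x₅ = x₆`, but both functions `Z₁` and `Z₃` contain them only through
`U₂ - U₃ - U₄ + U₅`, and there the poles cancel (`div_mid`): what remains is
`N₄D₅/(D₄N₅) + N₃D₆/(D₃N₆) + (x₅-x₄)(x₆-x₃) W(x₃,x₄) W(x₅,x₆) / (D₃D₄N₅N₆)`,
with `W(a,b) = (N(b)D(a) - N(a)D(b))/(b-a)` a polynomial. By continuity its limit is
`2q² + 4q(1-q)²`, and the three claims follow by adding up the pieces.
Comments number the points `x₁, …, x₈`; in the code `x₁` is `x 0`, and so on.
-/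

open Filter Finset
open scoped BigOperators Classical Topology

noncomputable section

/-- On the chamber, a quotient of conformal blocks is a single product of powers, with the
exponents subtracted; for sign sequences these exponents are `0`, `1` or `-1`. -/
lemma cblock_div (σ τ x : Fin 8 → ℝ) (hx : x ∈ chamber 8) :
    cblock σ x / cblock τ x = ∏ i, ∏ j, if i < j then
      (x j - x i) ^ ((σ i * σ j - τ i * τ j) / 2) else 1 := by
  unfold cblock
  rw [← Finset.prod_div_distrib, Finset.prod_filter, Fintype.prod_prod_type]
  refine Finset.prod_congr rfl fun i _ => Finset.prod_congr rfl fun j _ => ?_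
  by_cases h : i < j
  · simp only [h, if_true]
    rw [← Real.rpow_sub (sub_pos.2 (hx i j h)), sub_div]
  · simp [h]

lemma cblock_pos (σ x : Fin 8 → ℝ) (hx : x ∈ chamber 8) : 0 < cblock σ x := by
  unfold cblock
  refine Finset.prod_pos fun p hp => Real.rpow_pos_of_pos (sub_pos.2 (hx _ _ ?_)) _
  simpa using hp

/-- The quadratic `(t - x₁)(t - x₂)` attached to the first pair of points. -/
def quadN (x : Fin 8 → ℝ) (t : ℝ) : ℝ := (t - x 0) * (t - x 1)

/-- The quadratic `(x₇ - t)(x₈ - t)` attached to the last pair of points. -/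
def quadD (x : Fin 8 → ℝ) (t : ℝ) : ℝ := (x 6 - t) * (x 7 - t)

/-- The divided difference `(N(b) D(a) - N(a) D(b)) / (b - a)` of `N = quadN x` and
`D = quadD x`, written as the polynomial it is, so that it makes sense at `a = b`. -/
def divW (x : Fin 8 → ℝ) (a b : ℝ) : ℝ :=
  ((x 0 + x 1) - (x 6 + x 7)) * (a * b) + (x 6 * x 7 - x 0 * x 1) * (a + b)
    + x 0 * x 1 * (x 6 + x 7) - (x 0 + x 1) * (x 6 * x 7)

lemma divW_spec (x : Fin 8 → ℝ) (a b : ℝ) :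
    quadN x b * quadD x a - quadN x a * quadD x b = (b - a) * divW x a b := by
  unfold quadN quadD divW; ring

/-- The value of `U₆ / U₁` on the chamber. -/
def ratioSix (x : Fin 8 → ℝ) : ℝ :=
  quadN x (x 2) * quadN x (x 3) * (quadD x (x 4) * quadD x (x 5)) /
    (quadD x (x 2) * quadD x (x 3) * (quadN x (x 4) * quadN x (x 5)))

/-- The value of `(U₂ - U₃ - U₄ + U₅) / U₁` on the chamber, with the factors `x₄ - x₃` and
`x₆ - x₅` cancelled. -/
def ratioMid (x : Fin 8 → ℝ) : ℝ :=
  (quadN x (x 3) * quadD x (x 2) * (quadD x (x 4) * quadN x (x 5)) +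
    quadN x (x 2) * quadD x (x 3) * (quadD x (x 5) * quadN x (x 4)) +
    (x 4 - x 3) * (x 5 - x 2) * (divW x (x 2) (x 3) * divW x (x 4) (x 5))) /
    (quadD x (x 2) * quadD x (x 3) * (quadN x (x 4) * quadN x (x 5)))

lemma div_two (x : Fin 8 → ℝ) (hx : x ∈ chamber 8) :
    cblock ![1, 1, -1, 1, -1, 1, -1, -1] x / cblock ![1, 1, -1, -1, 1, 1, -1, -1] x =
      (x 4 - x 2) * (x 5 - x 3) / ((x 3 - x 2) * (x 5 - x 4)) *
        (quadN x (x 3) * quadD x (x 4) / (quadD x (x 3) * quadN x (x 4))) := by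
  rw [cblock_div _ _ _ hx]
  simp [Fin.prod_univ_eight, quadN, quadD]
  norm_num [Real.rpow_neg_one]
  simp only [div_eq_mul_inv, mul_inv]
  ac_rfl

lemma div_three (x : Fin 8 → ℝ) (hx : x ∈ chamber 8) :
    cblock ![1, 1, 1, -1, -1, 1, -1, -1] x / cblock ![1, 1, -1, -1, 1, 1, -1, -1] x =
      (x 4 - x 3) * (x 5 - x 2) / ((x 3 - x 2) * (x 5 - x 4)) *
        (quadN x (x 2) * quadD x (x 4) / (quadD x (x 2) * quadN x (x 4))) := by
  rw [cblock_div _ _ _ hx]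
  simp [Fin.prod_univ_eight, quadN, quadD]
  norm_num [Real.rpow_neg_one]
  simp only [div_eq_mul_inv, mul_inv]
  ac_rfl

lemma div_four (x : Fin 8 → ℝ) (hx : x ∈ chamber 8) :
    cblock ![1, 1, -1, 1, 1, -1, -1, -1] x / cblock ![1, 1, -1, -1, 1, 1, -1, -1] x =
      (x 4 - x 3) * (x 5 - x 2) / ((x 3 - x 2) * (x 5 - x 4)) *
        (quadN x (x 3) * quadD x (x 5) / (quadD x (x 3) * quadN x (x 5))) := by
  rw [cblock_div _ _ _ hx]
  simp [Fin.prod_univ_eight, quadN, quadD]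
  norm_num [Real.rpow_neg_one]
  simp only [div_eq_mul_inv, mul_inv]
  ac_rfl

lemma div_five (x : Fin 8 → ℝ) (hx : x ∈ chamber 8) :
    cblock ![1, 1, 1, -1, 1, -1, -1, -1] x / cblock ![1, 1, -1, -1, 1, 1, -1, -1] x =
      (x 4 - x 2) * (x 5 - x 3) / ((x 3 - x 2) * (x 5 - x 4)) *
        (quadN x (x 2) * quadD x (x 5) / (quadD x (x 2) * quadN x (x 5))) := by
  rw [cblock_div _ _ _ hx]
  simp [Fin.prod_univ_eight, quadN, quadD]
  norm_num [Real.rpow_neg_one]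
  simp only [div_eq_mul_inv, mul_inv]
  ac_rfl

lemma div_six (x : Fin 8 → ℝ) (hx : x ∈ chamber 8) :
    cblock ![1, 1, 1, 1, -1, -1, -1, -1] x / cblock ![1, 1, -1, -1, 1, 1, -1, -1] x =
      ratioSix x := by
  rw [cblock_div _ _ _ hx]
  simp [Fin.prod_univ_eight, quadN, quadD, ratioSix]
  norm_num [Real.rpow_neg_one]
  simp only [div_eq_mul_inv, mul_inv]
  ac_rfl

/-- The poles of `U₂, …, U₅` at `x₃ = x₄` and `x₅ = x₆` cancel in the alternating sum, because
`(x₅-x₃)(x₆-x₄) - (x₅-x₄)(x₆-x₃) = (x₄-x₃)(x₆-x₅)`. -/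
lemma div_mid (x : Fin 8 → ℝ) (hx : x ∈ chamber 8) :
    cblock ![1, 1, -1, 1, -1, 1, -1, -1] x / cblock ![1, 1, -1, -1, 1, 1, -1, -1] x -
    cblock ![1, 1, 1, -1, -1, 1, -1, -1] x / cblock ![1, 1, -1, -1, 1, 1, -1, -1] x -
    cblock ![1, 1, -1, 1, 1, -1, -1, -1] x / cblock ![1, 1, -1, -1, 1, 1, -1, -1] x +
    cblock ![1, 1, 1, -1, 1, -1, -1, -1] x / cblock ![1, 1, -1, -1, 1, 1, -1, -1] x =
      ratioMid x := by
  rw [div_two x hx, div_three x hx, div_four x hx, div_five x hx, ratioMid]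
  have hN : ∀ k : Fin 8, 1 < k → quadN x (x k) ≠ 0 := fun k hk =>
    mul_ne_zero (sub_pos.2 (hx _ _ (lt_trans (by decide) hk))).ne' (sub_pos.2 (hx _ _ hk)).ne'
  have hD : ∀ k : Fin 8, k < 6 → quadD x (x k) ≠ 0 := fun k hk =>
    mul_ne_zero (sub_pos.2 (hx _ _ hk)).ne' (sub_pos.2 (hx _ _ (lt_trans hk (by decide)))).ne'
  have n4 := hN 4 (by decide)
  have n5 := hN 5 (by decide)
  have d2 := hD 2 (by decide)
  have d3 := hD 3 (by decide)
  have e : x 3 - x 2 ≠ 0 := (sub_pos.2 (hx 2 3 (by decide))).ne'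
  have d : x 5 - x 4 ≠ 0 := (sub_pos.2 (hx 4 5 (by decide))).ne'
  have w1 := divW_spec x (x 2) (x 3)
  have w2 := divW_spec x (x 4) (x 5)
  generalize quadN x (x 2) = N2 at *
  generalize quadN x (x 3) = N3 at *
  generalize quadN x (x 4) = N4 at *
  generalize quadN x (x 5) = N5 at *
  generalize quadD x (x 2) = D2 at *
  generalize quadD x (x 3) = D3 at *
  generalize quadD x (x 4) = D4 at *
  generalize quadD x (x 5) = D5 at *
  rw [← mul_div_mul_left _ (D2 * D3 * (N4 * N5)) (mul_ne_zero e d)]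
  have key : (x 3 - x 2) * (x 5 - x 4) * (N3 * D2 * (D4 * N5) + N2 * D3 * (D5 * N4) +
      (x 4 - x 3) * (x 5 - x 2) * (divW x (x 2) (x 3) * divW x (x 4) (x 5))) =
      (x 3 - x 2) * (x 5 - x 4) * (N3 * D2 * (D4 * N5) + N2 * D3 * (D5 * N4)) +
      (x 4 - x 3) * (x 5 - x 2) * ((N3 * D2 - N2 * D3) * (N5 * D4 - N4 * D5)) := by
    rw [w1, w2]; ring
  rw [key]
  field_simp
  ring

section Limits

variable {y₁ y₂ y₃ y₄ : ℝ}

lemma tendsto_ratioSix (h12 : y₁ < y₂) (h23 : y₂ < y₃) (h34 : y₃ < y₄) :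
    Tendsto ratioSix (𝓝[chamber 8] ![y₁, y₁, y₂, y₂, y₃, y₃, y₄, y₄])
      (𝓝 (((y₂ - y₁) * (y₄ - y₃) / ((y₃ - y₁) * (y₄ - y₂))) ^ 4)) := by
  have a : y₃ - y₁ ≠ 0 := by intro h; linarith
  have b : y₄ - y₂ ≠ 0 := by intro h; linarith
  have hc : ContinuousAt ratioSix ![y₁, y₁, y₂, y₂, y₃, y₃, y₄, y₄] := by
    unfold ratioSix quadN quadD
    refine ContinuousAt.div (by fun_prop) (by fun_prop) ?_
    simp [a, b]
  convert hc.tendsto.mono_left nhdsWithin_le_nhds using 2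
  simp [ratioSix, quadN, quadD]
  field_simp

lemma tendsto_ratioMid (h12 : y₁ < y₂) (h23 : y₂ < y₃) (h34 : y₃ < y₄) (q : ℝ)
    (hq : q = (y₂ - y₁) * (y₄ - y₃) / ((y₃ - y₁) * (y₄ - y₂))) :
    Tendsto ratioMid (𝓝[chamber 8] ![y₁, y₁, y₂, y₂, y₃, y₃, y₄, y₄])
      (𝓝 (2 * q ^ 2 + 4 * q * (1 - q) ^ 2)) := by
  have a : y₃ - y₁ ≠ 0 := by intro h; linarith
  have b : y₄ - y₂ ≠ 0 := by intro h; linarith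
  have hc : ContinuousAt ratioMid ![y₁, y₁, y₂, y₂, y₃, y₃, y₄, y₄] := by
    unfold ratioMid quadN quadD divW
    refine ContinuousAt.div (by fun_prop) (by fun_prop) ?_
    simp [a, b]
  convert hc.tendsto.mono_left nhdsWithin_le_nhds using 2
  have hq' : 1 - q = (y₃ - y₂) * (y₄ - y₁) / ((y₃ - y₁) * (y₄ - y₂)) := by
    rw [hq]; field_simp; ring
  rw [hq', hq]
  simp [ratioMid, quadN, quadD, divW]
  field_simp
  ring

end Limits

/-- Explicit fusion limits for `N = 2` (eight points fusing to four):
the normalized pure partition functions `Z₁, Z₂, Z₃` (expressed in conformal blocks of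
the six Dyck paths of length 8 above `σ¹`) converge to `2q(1-q)(2-q+q²)`, `q⁴` and
`(1-q)⁴` respectively, where `q` is the cross-ratio. -/
theorem eight_point_fusion_limits (y₁ y₂ y₃ y₄ : ℝ)
    (h12 : y₁ < y₂) (h23 : y₂ < y₃) (h34 : y₃ < y₄) (q : ℝ)
    (hq : q = (y₂ - y₁) * (y₄ - y₃) / ((y₃ - y₁) * (y₄ - y₂))) :
    Tendsto
      (fun x : Fin 8 → ℝ =>
        (cblock ![1, 1, -1, 1, -1, 1, -1, -1] x -
            cblock ![1, 1, 1, -1, -1, 1, -1, -1] x -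
            cblock ![1, 1, -1, 1, 1, -1, -1, -1] x +
            cblock ![1, 1, 1, -1, 1, -1, -1, -1] x -
            2 * cblock ![1, 1, 1, 1, -1, -1, -1, -1] x) /
          cblock ![1, 1, -1, -1, 1, 1, -1, -1] x)
      (𝓝[chamber 8] ![y₁, y₁, y₂, y₂, y₃, y₃, y₄, y₄])
      (𝓝 (2 * q * (1 - q) * (2 - q + q ^ 2))) ∧
    Tendsto
      (fun x : Fin 8 → ℝ =>
        cblock ![1, 1, 1, 1, -1, -1, -1, -1] x /
          cblock ![1, 1, -1, -1, 1, 1, -1, -1] x)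
      (𝓝[chamber 8] ![y₁, y₁, y₂, y₂, y₃, y₃, y₄, y₄])
      (𝓝 (q ^ 4)) ∧
    Tendsto
      (fun x : Fin 8 → ℝ =>
        (cblock ![1, 1, -1, -1, 1, 1, -1, -1] x -
            cblock ![1, 1, -1, 1, -1, 1, -1, -1] x +
            cblock ![1, 1, 1, -1, -1, 1, -1, -1] x +
            cblock ![1, 1, -1, 1, 1, -1, -1, -1] x -
            cblock ![1, 1, 1, -1, 1, -1, -1, -1] x +
            cblock ![1, 1, 1, 1, -1, -1, -1, -1] x) /
          cblock ![1, 1, -1, -1, 1, 1, -1, -1] x)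
      (𝓝[chamber 8] ![y₁, y₁, y₂, y₂, y₃, y₃, y₄, y₄])
      (𝓝 ((1 - q) ^ 4)) := by
  have hmem : ∀ᶠ x in 𝓝[chamber 8] ![y₁, y₁, y₂, y₂, y₃, y₃, y₄, y₄], x ∈ chamber 8 :=
    eventually_mem_nhdsWithin
  have h6 := tendsto_ratioSix h12 h23 h34
  rw [← hq] at h6
  have hm := tendsto_ratioMid h12 h23 h34 q hq
  refine ⟨?_, ?_, ?_⟩
  · have h := hm.sub (h6.const_mul 2)
    convert h.congr' ?_ using 2
    · ring
    · filter_upwards [hmem] with x hx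
      rw [← div_mid x hx, ← div_six x hx]
      ring
  · refine h6.congr' ?_
    filter_upwards [hmem] with x hx
    exact (div_six x hx).symm
  · have h := (hm.const_sub 1).add h6
    convert h.congr' ?_ using 2
    · ring
    · filter_upwards [hmem] with x hx
      have h1 := div_self (cblock_pos ![1, 1, -1, -1, 1, 1, -1, -1] x hx).ne'
      rw [← div_mid x hx, ← div_six x hx]
      simp only [add_div, sub_div, h1]
      ring
end
end
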